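/- arXiv:1105.5127 — 4 statements merged into one kernel-verified Lean document; each statement's English description precedes it below -/
import Mathlib

section
/- Let p be an odd prime, r ≥ 1, and q = p^r. Let f(x,y) = A x² + 2B x y + C y² be an integral binary quadratic form with p ∤ A and AC − B² = a² for a nonzero integer a. Let b be an integer with gcd(b, p) = 1 and let u, v be integers. Consider S = ∑_{x=0}^{q−1} ∑_{y=0}^{q−1} e_q(b·f(x,y) + u x + v y). Then S = 0 unless gcd(a², q) divides A v − B u, and in all cases |S| ≤ q · gcd(a², q)^{1/2}. -/
/-- The additive character `e_q(x) = exp(2πi x / q)`. -/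
noncomputable def eChar (q : ℕ) (x : ℤ) : ℂ :=
  Complex.exp (2 * Real.pi * Complex.I * (x : ℂ) / (q : ℂ))

open Finset in
lemma sum_range_zmod (q : ℕ) [NeZero q] (f : ZMod q → ℂ) :
    ∑ x ∈ Finset.range q, f (x : ZMod q) = ∑ x : ZMod q, f x := by
  refine Finset.sum_nbij' (fun x => (x : ZMod q)) (fun x => x.val) ?_ ?_ ?_ ?_ ?_
  · intro x _; simp
  · intro x _; simpa using ZMod.val_lt x
  · intro x hx; exact ZMod.val_cast_of_lt (by simpa using hx)
  · intro x _; simp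
  · intro x _; rfl

/-- One-variable quadratic Gauss sum. -/
noncomputable def gsum (q : ℕ) [NeZero q] (c d : ZMod q) : ℂ :=
  ∑ y : ZMod q, ZMod.stdAddChar (c * y ^ 2 + d * y)

lemma gsum_shift (q : ℕ) [NeZero q] (c d h : ZMod q) (hc : c * h = 0) :
    gsum q c d = ZMod.stdAddChar (d * h) * gsum q c d := by
  unfold gsum
  rw [Finset.mul_sum]
  rw [← Equiv.sum_comp (Equiv.addRight h)]
  refine Finset.sum_congr rfl fun y _ => ?_
  rw [← AddChar.map_add_eq_mul]
  congr 1
  simp only [Equiv.coe_addRight]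
  linear_combination (2 * y + h) * hc

lemma gsum_norm_sq (q : ℕ) [NeZero q] (h2 : IsUnit (2 : ZMod q)) (c d : ZMod q) :
    ‖gsum q c d‖ ^ 2 ≤ q * (Finset.univ.filter (fun h : ZMod q => c * h = 0)).card := by
  have key : gsum q c d * (starRingEnd ℂ) (gsum q c d) =
      ∑ h : ZMod q, if c * h = 0 then
        (ZMod.stdAddChar (c * h ^ 2 + d * h) : ℂ) * q else 0 := by
    have h1 : gsum q c d * (starRingEnd ℂ) (gsum q c d) =
        ∑ y : ZMod q, ∑ h : ZMod q, (ZMod.stdAddChar (c * h ^ 2 + d * h) : ℂ) *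
          ZMod.stdAddChar (y * (2 * (c * h))) := by
      rw [mul_comm]
      unfold gsum
      rw [map_sum, Finset.sum_mul]
      refine Finset.sum_congr rfl fun y _ => ?_
      rw [Finset.mul_sum, ← Equiv.sum_comp (Equiv.addRight y)]
      refine Finset.sum_congr rfl fun h _ => ?_
      rw [← AddChar.map_neg_eq_conj, ← AddChar.map_add_eq_mul, ← AddChar.map_add_eq_mul]
      congr 1
      simp only [Equiv.coe_addRight]
      ring
    rw [h1, Finset.sum_comm]
    refine Finset.sum_congr rfl fun h _ => ?_
    rw [← Finset.mul_sum, AddChar.sum_mulShift _ (ZMod.isPrimitive_stdAddChar q)]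
    have : (2 * (c * h) = 0) ↔ c * h = 0 := h2.mul_right_eq_zero
    simp [this]
  rw [Complex.mul_conj, Complex.normSq_eq_norm_sq] at key
  have : ‖gsum q c d‖ ^ 2 = ‖((‖gsum q c d‖ ^ 2 : ℝ) : ℂ)‖ := by
    rw [Complex.norm_real]; simp
  rw [this, key, ← Finset.sum_filter]
  refine (norm_sum_le _ _).trans ?_
  simp [AddChar.norm_apply, mul_comm]

lemma card_ann (q : ℕ) [NeZero q] (n : ℤ) (w c : ZMod q) (hw : IsUnit w)
    (hc : c = w * (n : ZMod q)) :
    (Finset.univ.filter (fun h : ZMod q => c * h = 0)).card ≤ Int.gcd n q := by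
  have hpos : 0 < Int.gcd n q := Int.gcd_pos_of_ne_zero_right _ (by exact_mod_cast NeZero.ne q)
  refine le_trans (Finset.card_le_card ?_) (IsAddCyclic.card_nsmul_eq_zero_le (α := ZMod q) hpos)
  intro h hh
  simp only [Finset.mem_filter, Finset.mem_univ, true_and] at hh ⊢
  rw [hc, mul_assoc, hw.mul_right_eq_zero] at hh
  have := congrArg (Int.cast : ℤ → ZMod q) (Int.gcd_eq_gcd_ab n q)
  push_cast at this
  rw [nsmul_eq_mul, this]
  simp only [ZMod.natCast_self, zero_mul, add_zero]
  linear_combination (Int.gcdA n q : ZMod q) * hh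

lemma gsum_vanish (q : ℕ) [NeZero q] (n D : ℤ) (w c d e : ZMod q)
    (hc : c = w * (n : ZMod q)) (hd : (D : ZMod q) = e * d)
    (hD : ¬ ((Int.gcd n q : ℤ) ∣ D)) : gsum q c d = 0 := by
  by_contra hne
  apply hD
  obtain ⟨k, hk⟩ : (Int.gcd n q : ℤ) ∣ n := Int.gcd_dvd_left ..
  obtain ⟨m, hm⟩ : (Int.gcd n q : ℤ) ∣ q := Int.gcd_dvd_right ..
  generalize (Int.gcd n q : ℤ) = g at *
  have hq : (g : ZMod q) * m = 0 := by
    have := congrArg (Int.cast : ℤ → ZMod q) hm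
    push_cast at this
    rw [← this]; simp
  have hn : (n : ZMod q) = g * k := by rw [hk]; push_cast; rfl
  have h0 : c * (m : ZMod q) = 0 := by
    rw [hc, hn]; linear_combination w * k * hq
  have h1 := gsum_shift q c d m h0
  have h2 : (ZMod.stdAddChar (d * (m : ZMod q)) : ℂ) = 1 := by
    have := mul_right_cancel₀ hne ((one_mul _).trans h1)
    exact this.symm
  have h3 : d * (m : ZMod q) = 0 := by
    apply ZMod.injective_stdAddChar
    rw [h2, AddChar.map_zero_eq_one]
  have h4 : ((D * m : ℤ) : ZMod q) = 0 := by
    push_cast; rw [hd, mul_assoc, h3, mul_zero]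
  rw [ZMod.intCast_zmod_eq_zero_iff_dvd, hm] at h4
  have hm0 : m ≠ 0 := by
    rintro rfl
    apply NeZero.ne q
    simpa using hm
  exact Int.dvd_of_mul_dvd_mul_right hm0 h4

/-- Evaluation of the Gauss sum `S = ∑_{x,y mod q} e_q(b f(x,y) + ux + vy)` for
`q = p^r` an odd prime power, `f = A x² + 2B x y + C y²` with `p ∤ A`, `AC − B² = a²`,
and `gcd(b,p) = 1`: the sum vanishes unless `gcd(a², q) ∣ Av − Bu`, and in all cases
`|S| ≤ q · gcd(a², q)^{1/2}`. -/
theorem gauss_sum_binary_form (p r : ℕ) (hp : p.Prime) (hodd : Odd p) (hr : 1 ≤ r)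
    (A B C a b u v : ℤ) (hpA : ¬ (p : ℤ) ∣ A) (ha : a ≠ 0)
    (hdisc : A * C - B ^ 2 = a ^ 2) (hb : Int.gcd b p = 1) :
    (¬ ((Int.gcd (a ^ 2) ((p : ℤ) ^ r) : ℤ) ∣ A * v - B * u) →
        (∑ x ∈ Finset.range (p ^ r), ∑ y ∈ Finset.range (p ^ r),
          eChar (p ^ r) (b * (A * (x : ℤ) ^ 2 + 2 * B * x * y + C * y ^ 2)
            + u * x + v * y)) = 0) ∧
      ‖(∑ x ∈ Finset.range (p ^ r), ∑ y ∈ Finset.range (p ^ r),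
          eChar (p ^ r) (b * (A * (x : ℤ) ^ 2 + 2 * B * x * y + C * y ^ 2)
            + u * x + v * y))‖
        ≤ ((p : ℝ) ^ r) * Real.sqrt (Int.gcd (a ^ 2) ((p : ℤ) ^ r)) := by
  have hq0 : NeZero (p ^ r) := ⟨pow_ne_zero _ hp.ne_zero⟩
  have hunit : ∀ z : ℤ, ¬ (p : ℤ) ∣ z → IsUnit (z : ZMod (p ^ r)) := by
    intro z hz
    have hco : IsCoprime z ((p : ℤ) ^ r) :=
      IsCoprime.pow_right ((Nat.prime_iff_prime_int.mp hp).coprime_iff_not_dvd.mpr hz).symm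
    obtain ⟨s, t, hst⟩ := hco
    have h1 := congrArg (Int.cast : ℤ → ZMod (p ^ r)) hst
    have h0 : ((p : ZMod (p ^ r))) ^ r = 0 := by
      have := ZMod.natCast_self (p ^ r)
      push_cast at this
      exact this
    push_cast at h1
    rw [h0, mul_zero, add_zero] at h1
    exact IsUnit.of_mul_eq_one (s : ZMod (p ^ r)) (by rw [mul_comm]; exact h1)
  have hA := hunit A hpA
  have hbu : IsUnit (b : ZMod (p ^ r)) := by
    apply hunit
    intro h
    have : (p : ℤ) ∣ (Int.gcd b p : ℤ) := Int.dvd_coe_gcd h dvd_rfl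
    rw [hb] at this
    exact hp.one_lt.ne' (by exact_mod_cast Int.eq_one_of_dvd_one (by positivity) this)
  have h2 : IsUnit (2 : ZMod (p ^ r)) := by
    have := hunit 2 (by
      intro h
      have h' : p ∣ 2 := by exact_mod_cast h
      rw [Nat.prime_dvd_prime_iff_eq hp Nat.prime_two] at h'
      subst h'
      exact absurd hodd (by decide))
    simpa using this
  obtain ⟨A', hA'⟩ := hA.exists_right_inv
  have hA'u : IsUnit A' := IsUnit.of_mul_eq_one (A : ZMod (p ^ r)) (by rw [mul_comm]; exact hA')
  have hdisc' : (A : ZMod (p ^ r)) * C - B ^ 2 = a ^ 2 := by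
    have := congrArg (Int.cast : ℤ → ZMod (p ^ r)) hdisc
    push_cast at this
    exact this
  set c : ZMod (p ^ r) := b * A' * ((a ^ 2 : ℤ) : ZMod (p ^ r)) with hc
  set d : ZMod (p ^ r) := v - u * A' * B with hd
  have hS : (∑ x ∈ Finset.range (p ^ r), ∑ y ∈ Finset.range (p ^ r),
          eChar (p ^ r) (b * (A * (x : ℤ) ^ 2 + 2 * B * x * y + C * y ^ 2)
            + u * x + v * y)) = gsum (p ^ r) (b * A) u * gsum (p ^ r) c d := by
    obtain ⟨F, hF⟩ : ∃ F : ZMod (p ^ r) → ZMod (p ^ r) → ZMod (p ^ r), ∀ x y, F x y =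
        b * (A * x ^ 2 + 2 * B * x * y + C * y ^ 2) + u * x + v * y := ⟨_, fun _ _ => rfl⟩
    have e1 : ∀ x y : ℕ, eChar (p ^ r) (b * (A * (x : ℤ) ^ 2 + 2 * B * x * y + C * y ^ 2)
            + u * x + v * y) = ZMod.stdAddChar (F x y) := by
      intro x y
      rw [eChar, ← ZMod.stdAddChar_coe, hF]
      push_cast
      rfl
    simp only [e1]
    rw [sum_range_zmod (p ^ r) (fun x => ∑ y ∈ Finset.range (p ^ r),
      (ZMod.stdAddChar (F x y) : ℂ))]
    rw [Finset.sum_congr rfl fun x _ => sum_range_zmod (p ^ r) (fun y =>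
      (ZMod.stdAddChar (F x y) : ℂ))]
    rw [Finset.sum_comm]
    unfold gsum
    rw [mul_comm, Finset.sum_mul]
    refine Finset.sum_congr rfl fun y _ => ?_
    rw [Finset.mul_sum, ← Equiv.sum_comp (Equiv.subRight (A' * B * y))]
    refine Finset.sum_congr rfl fun x _ => ?_
    rw [← AddChar.map_add_eq_mul]
    congr 1
    simp only [Equiv.subRight_apply, hF, hc, hd]
    push_cast
    rw [← hdisc']
    linear_combination (-2 * b * B * x * y - b * C * y ^ 2 + b * A' * B ^ 2 * y ^ 2) * hA'
  rw [hS]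
  have hcast : ((p : ℤ) ^ r) = ((p ^ r : ℕ) : ℤ) := by push_cast; rfl
  have hcastR : ((p : ℝ) ^ r) = ((p ^ r : ℕ) : ℝ) := by push_cast; rfl
  rw [hcast, hcastR]
  constructor
  · intro h
    rw [gsum_vanish (p ^ r) (a ^ 2) (A * v - B * u) (b * A') c d A hc ?_ h, mul_zero]
    rw [hd]; push_cast
    linear_combination (u * B : ZMod (p ^ r)) * hA'
  · have n1 := gsum_norm_sq (p ^ r) h2 (b * A) u
    have n2 := gsum_norm_sq (p ^ r) h2 c d
    have c1 := card_ann (p ^ r) 1 (b * A) (b * A) (hbu.mul hA) (by simp)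
    have c2 := card_ann (p ^ r) (a ^ 2) (b * A') c (hbu.mul hA'u) hc
    rw [Int.one_gcd] at c1
    generalize p ^ r = q at *
    have hq : (0 : ℝ) ≤ q := Nat.cast_nonneg _
    have m1 : ‖gsum q (b * A) u‖ ^ 2 ≤ q := n1.trans (by
      calc _ ≤ (q : ℝ) * ((1 : ℕ) : ℝ) := by gcongr
        _ = q := by simp)
    have m2 : ‖gsum q c d‖ ^ 2 ≤ q * (Int.gcd (a ^ 2) q : ℝ) := n2.trans (by gcongr)
    rw [norm_mul]
    refine (sq_le_sq₀ (by positivity) (by positivity)).mp ?_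
    rw [mul_pow, mul_pow, Real.sq_sqrt (by positivity)]
    calc _ ≤ (q : ℝ) * (q * (Int.gcd (a ^ 2) q : ℝ)) := by gcongr
      _ = _ := by ring
end

section
/- There is an absolute constant C (one may take C = 2) such that for every prime p, every integer r ≥ 1 with q = p^r, and all integers c, d: |∑_{b=1, gcd(b,p)=1}^{q} e_q(c b + d b*)| ≤ C · q^{3/4} · gcd(q, c, d)^{1/4}, where b* denotes the multiplicative inverse of b modulo q. -/
/-- Kloosterman sum over the units of `ZMod N`. -/
noncomputable def klo (N : ℕ) [NeZero N] (a b : ZMod N) : ℂ :=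
  ∑ u : (ZMod N)ˣ, ZMod.stdAddChar (a * (u : ZMod N) + b * ((u⁻¹ : (ZMod N)ˣ) : ZMod N))

lemma klo_scale (N : ℕ) [NeZero N] (a b : ZMod N) (w : (ZMod N)ˣ) :
    klo N (a * w) (b * (w⁻¹ : (ZMod N)ˣ)) = klo N a b := by
  symm
  unfold klo
  rw [← Equiv.sum_comp (Equiv.mulLeft w)]
  refine Finset.sum_congr rfl fun u _ => ?_
  congr 1
  simp only [Equiv.coe_mulLeft, mul_inv, Units.val_mul]
  ring

lemma klo_trivial (N : ℕ) [NeZero N] (a b : ZMod N) : ‖klo N a b‖ ≤ (N.totient : ℝ) := by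
  unfold klo
  refine (norm_sum_le _ _).trans ?_
  simp [AddChar.norm_apply, ZMod.card_units_eq_totient]

/-! ### Stationary phase -/

lemma klo_stationary (N : ℕ) [NeZero N] (a b e : ZMod N) (he : e * e = 0) :
    ‖klo N a b‖ ≤
      ((Finset.univ.filter fun u : (ZMod N)ˣ =>
        e * (a * u - b * (u⁻¹ : (ZMod N)ˣ)) = 0).card : ℝ) := by
  classical
  have hw : ∀ t : ZMod N, klo N a b = ∑ u : (ZMod N)ˣ,
      ZMod.stdAddChar (a * (u : ZMod N) + b * ((u⁻¹ : (ZMod N)ˣ) : ZMod N)) *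
        ZMod.stdAddChar (t * (e * (a * (u : ZMod N) - b * ((u⁻¹ : (ZMod N)ˣ) : ZMod N)))) := by
    intro t
    let w : (ZMod N)ˣ := ⟨1 + e * t, 1 - e * t, by linear_combination (-t ^ 2) * he,
      by linear_combination (-t ^ 2) * he⟩
    rw [← klo_scale N a b w]
    unfold klo
    refine Finset.sum_congr rfl fun u _ => ?_
    rw [← AddChar.map_add_eq_mul]
    congr 1
    have h1 : (w : ZMod N) = 1 + e * t := rfl
    have h2 : ((w⁻¹ : (ZMod N)ˣ) : ZMod N) = 1 - e * t := rfl
    rw [h1, h2]; ring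
  have hsum : (N : ℂ) * klo N a b = ∑ u : (ZMod N)ˣ,
      ZMod.stdAddChar (a * (u : ZMod N) + b * ((u⁻¹ : (ZMod N)ˣ) : ZMod N)) *
        (if e * (a * u - b * (u⁻¹ : (ZMod N)ˣ)) = 0 then (N : ℂ) else 0) := by
    have : (N : ℂ) * klo N a b = ∑ t : ZMod N, klo N a b := by simp [ZMod.card]
    rw [this, Finset.sum_congr rfl (fun t _ => hw t), Finset.sum_comm]
    refine Finset.sum_congr rfl fun u _ => ?_
    rw [← Finset.mul_sum, AddChar.sum_mulShift _ (ZMod.isPrimitive_stdAddChar N)]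
    simp [ZMod.card]
  have hN : (0 : ℝ) < N := by exact_mod_cast Nat.pos_of_ne_zero (NeZero.ne N)
  have hle : (N : ℝ) * ‖klo N a b‖ ≤ N * ((Finset.univ.filter fun u : (ZMod N)ˣ =>
        e * (a * u - b * (u⁻¹ : (ZMod N)ˣ)) = 0).card : ℝ) := by
    have h0 : (N : ℝ) * ‖klo N a b‖ = ‖(N : ℂ) * klo N a b‖ := by simp
    rw [h0, hsum]
    refine (norm_sum_le _ _).trans ?_
    rw [Finset.card_filter]
    push_cast
    rw [Finset.mul_sum]
    refine Finset.sum_le_sum fun u _ => ?_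
    rw [norm_mul, AddChar.norm_apply, one_mul]
    split_ifs <;> simp
  exact le_of_mul_le_mul_left hle hN

lemma dvd_of_not_isUnit {p r : ℕ} (hp : p.Prime) (x : ZMod (p ^ r)) (hx : ¬ IsUnit x) :
    (p : ZMod (p ^ r)) ∣ x := by
  have : NeZero (p ^ r) := ⟨pow_ne_zero _ hp.ne_zero⟩
  rw [← ZMod.natCast_zmod_val x] at hx ⊢
  rw [ZMod.isUnit_iff_coprime] at hx
  have : p ∣ x.val := by
    by_contra h
    exact hx (Nat.Coprime.pow_right _ ((Nat.Prime.coprime_iff_not_dvd hp).2 h).symm)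
  exact_mod_cast Nat.cast_dvd_cast this

lemma not_isUnit_p {p r : ℕ} (hp : p.Prime) (hr : 1 ≤ r) : ¬ IsUnit (p : ZMod (p ^ r)) := by
  rw [ZMod.isUnit_iff_coprime]
  intro h
  have := Nat.Coprime.coprime_dvd_right (dvd_pow_self p (by omega : r ≠ 0)) h
  rw [Nat.coprime_self] at this
  exact hp.one_lt.ne' this

lemma card_ann_s9 {p r j : ℕ} (hp : p.Prime) (hj : j ≤ r) [NeZero (p ^ r)] :
    (Finset.univ.filter fun x : ZMod (p ^ r) => (p : ZMod (p ^ r)) ^ j * x = 0).card ≤ p ^ j := by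
  have key : ∀ x : ZMod (p ^ r), (p : ZMod (p ^ r)) ^ j * x = 0 → p ^ (r - j) ∣ x.val := by
    intro x hx
    rw [← ZMod.natCast_zmod_val x] at hx
    have h2 : ((p ^ j * x.val : ℕ) : ZMod (p ^ r)) = 0 := by push_cast; simpa using hx
    rw [ZMod.natCast_eq_zero_iff] at h2
    have h3 : p ^ r = p ^ j * p ^ (r - j) := by rw [← pow_add]; congr 1; omega
    exact Nat.dvd_of_mul_dvd_mul_left (pow_pos hp.pos j) (h3.symm.dvd.trans h2)
  calc _ ≤ (Finset.range (p ^ j)).card := by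
        refine Finset.card_le_card_of_injOn (fun x => x.val / p ^ (r - j)) ?_ ?_
        · intro x hx
          simp only [Finset.coe_range, Set.mem_Iio]
          rw [Nat.div_lt_iff_lt_mul (pow_pos hp.pos _), ← pow_add]
          have := ZMod.val_lt x
          rwa [show j + (r - j) = r by omega]
        · intro x hx y hy hxy
          simp only [Finset.coe_filter, Finset.mem_univ, true_and, Set.mem_ofPred_eq] at hx hy hxy
          apply ZMod.val_injective
          rw [← Nat.div_mul_cancel (key x hx), ← Nat.div_mul_cancel (key y hy), hxy]
    _ = p ^ j := Finset.card_range _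

lemma dvd_two {p r : ℕ} (hp : p.Prime) (hr : 2 ≤ r) (x y u : ZMod (p ^ r)) (hu : IsUnit u)
    (hxy : x + y = 2 * u) : x ∣ 2 ∨ y ∣ 2 := by
  by_cases hx : IsUnit x
  · exact Or.inl hx.dvd
  by_cases hy : IsUnit y
  · exact Or.inr hy.dvd
  have hpn := not_isUnit_p hp (by omega : 1 ≤ r)
  obtain ⟨x', hx'⟩ := dvd_of_not_isUnit hp x hx
  obtain ⟨y', hy'⟩ := dvd_of_not_isUnit hp y hy
  rcases hp.eq_two_or_odd' with h2 | hodd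
  · subst h2
    push_cast at hx' hy' hpn
    by_cases hx1 : IsUnit x'
    · left; obtain ⟨v, rfl⟩ := hx1
      exact ⟨(v⁻¹ : (ZMod (2 ^ r))ˣ), by rw [hx', mul_assoc, Units.mul_inv, mul_one]⟩
    by_cases hy1 : IsUnit y'
    · right; obtain ⟨v, rfl⟩ := hy1
      exact ⟨(v⁻¹ : (ZMod (2 ^ r))ˣ), by rw [hy', mul_assoc, Units.mul_inv, mul_one]⟩
    exfalso
    obtain ⟨a, ha⟩ := dvd_of_not_isUnit hp x' hx1
    obtain ⟨b, hb⟩ := dvd_of_not_isUnit hp y' hy1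
    push_cast at ha hb
    have hz : (2 : ZMod (2 ^ r)) * (2 * (a + b) - u) = 0 := by
      linear_combination hxy - hx' - hy' - 2 * ha - 2 * hb
    have hzu : IsUnit (2 * (a + b) - u) := by
      by_contra hn
      obtain ⟨c, hc⟩ := dvd_of_not_isUnit hp _ hn
      push_cast at hc
      have : u = 2 * (a + b - c) := by linear_combination -hc
      rw [this] at hu
      exact hpn (isUnit_of_mul_isUnit_left hu)
    rw [hzu.mul_left_eq_zero] at hz
    have hz' : ((2 : ℕ) : ZMod (2 ^ r)) = 0 := by exact_mod_cast hz
    rw [ZMod.natCast_eq_zero_iff] at hz'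
    have := Nat.le_of_dvd (by norm_num) hz'
    have h4 : 2 ^ 2 ≤ 2 ^ r := Nat.pow_le_pow_right (by norm_num) hr
    omega
  · exfalso
    have h2 : IsUnit (2 : ZMod (p ^ r)) := by
      have := (ZMod.isUnit_iff_coprime 2 (p ^ r)).2
        (Nat.Coprime.pow_right _ (Nat.coprime_two_left.2 hodd))
      exact_mod_cast this
    have : IsUnit ((p : ZMod (p ^ r)) * (x' + y')) := by
      have e : (p : ZMod (p ^ r)) * (x' + y') = 2 * u := by rw [← hxy, hx', hy']; ring
      rw [e]; exact h2.mul hu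
    exact hpn (isUnit_of_mul_isUnit_left this)

lemma card_stat {p r k : ℕ} (hp : p.Prime) (hr : 2 ≤ r) (hk : k < r) [NeZero (p ^ r)]
    (a b : ZMod (p ^ r)) (hab : IsUnit a ∨ IsUnit b) :
    (Finset.univ.filter fun u : (ZMod (p ^ r))ˣ =>
        (p : ZMod (p ^ r)) ^ k * (a * u - b * (u⁻¹ : (ZMod (p ^ r))ˣ)) = 0).card ≤
    2 * (Finset.univ.filter fun x : ZMod (p ^ r) => (p : ZMod (p ^ r)) ^ k * 2 * x = 0).card := by
  classical
  have hpn := not_isUnit_p hp (by omega : 1 ≤ r)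
  set S := Finset.univ.filter fun u : (ZMod (p ^ r))ˣ =>
        (p : ZMod (p ^ r)) ^ k * (a * u - b * (u⁻¹ : (ZMod (p ^ r))ˣ)) = 0 with hS
  set T := Finset.univ.filter fun x : ZMod (p ^ r) => (p : ZMod (p ^ r)) ^ k * 2 * x = 0 with hT
  rcases S.eq_empty_or_nonempty with h0 | ⟨u0, hu0⟩
  · rw [h0]; simp
  have hsq : ∀ u ∈ S, (p : ZMod (p ^ r)) ^ k * (a * (u : ZMod (p ^ r)) ^ 2 - b) = 0 := by
    intro u hu
    have h1 := (Finset.mem_filter.1 hu).2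
    have h2 := Units.mul_inv u
    linear_combination (u : ZMod (p ^ r)) * h1 + (p : ZMod (p ^ r)) ^ k * b * h2
  have ha : IsUnit a := by
    by_contra hna
    have hb : IsUnit b := hab.resolve_left hna
    obtain ⟨a', ha'⟩ := dvd_of_not_isUnit hp a hna
    have h1 := hsq u0 hu0
    have h2 : IsUnit (a * (u0 : ZMod (p ^ r)) ^ 2 - b) := by
      by_contra hn
      obtain ⟨c, hc⟩ := dvd_of_not_isUnit hp _ hn
      have : b = p * (a' * (u0 : ZMod (p ^ r)) ^ 2 - c) := by
        linear_combination -hc + (u0 : ZMod (p ^ r)) ^ 2 * ha'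
      rw [this] at hb
      exact hpn (isUnit_of_mul_isUnit_left hb)
    rw [h2.mul_left_eq_zero] at h1
    have h3 : ((p ^ k : ℕ) : ZMod (p ^ r)) = 0 := by exact_mod_cast h1
    rw [ZMod.natCast_eq_zero_iff, Nat.pow_dvd_pow_iff_le_right hp.one_lt] at h3
    omega
  have hor : ∀ u ∈ S, ((u : ZMod (p ^ r)) - u0) ∈ T ∨ ((u : ZMod (p ^ r)) + u0) ∈ T := by
    intro u hu
    have h1 := hsq u hu
    have h2 := hsq u0 hu0
    have h3 : (p : ZMod (p ^ r)) ^ k * ((u - u0) * (u + u0)) = 0 := by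
      have : a * ((p : ZMod (p ^ r)) ^ k * (((u : ZMod (p ^ r)) - u0) * (u + u0))) = 0 := by
        linear_combination h1 - h2
      rwa [ha.mul_right_eq_zero] at this
    simp only [hT, Finset.mem_filter, Finset.mem_univ, true_and]
    rcases dvd_two hp hr ((u : ZMod (p ^ r)) - u0) (u + u0) u u.isUnit (by ring) with ⟨v, hv⟩ | ⟨v, hv⟩
    · right; rw [hv]; linear_combination v * h3
    · left; rw [hv]; linear_combination v * h3
  have hsub : S.image (fun u : (ZMod (p ^ r))ˣ => (u : ZMod (p ^ r))) ⊆
      T.image (fun x => x + (u0 : ZMod (p ^ r))) ∪ T.image (fun x => x - (u0 : ZMod (p ^ r))) := by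
    intro z hz
    obtain ⟨u, hu, rfl⟩ := Finset.mem_image.1 hz
    rcases hor u hu with h | h
    · exact Finset.mem_union_left _ (Finset.mem_image.2 ⟨_, h, by ring⟩)
    · exact Finset.mem_union_right _ (Finset.mem_image.2 ⟨_, h, by ring⟩)
  calc S.card = (S.image (fun u : (ZMod (p ^ r))ˣ => (u : ZMod (p ^ r)))).card :=
        (Finset.card_image_of_injective _ Units.val_injective).symm
    _ ≤ _ := Finset.card_le_card hsub
    _ ≤ _ := Finset.card_union_le _ _
    _ ≤ T.card + T.card := add_le_add Finset.card_image_le Finset.card_image_le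
    _ = 2 * T.card := by ring

lemma klo_high {p r : ℕ} (hp : p.Prime) (hr : 2 ≤ r) [NeZero (p ^ r)]
    (a b : ZMod (p ^ r)) (hab : IsUnit a ∨ IsUnit b) :
    ‖klo (p ^ r) a b‖ ^ 4 ≤ 16 * ((p : ℝ) ^ r) ^ 3 := by
  set k := (r + 1) / 2 with hk
  have he : (p : ZMod (p ^ r)) ^ k * (p : ZMod (p ^ r)) ^ k = 0 := by
    rw [← pow_add]
    have : ((p ^ (k + k) : ℕ) : ZMod (p ^ r)) = 0 := by
      rw [ZMod.natCast_eq_zero_iff]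
      exact pow_dvd_pow _ (by omega)
    exact_mod_cast this
  have h1 := klo_stationary (p ^ r) a b _ he
  have h2 := card_stat hp hr (by omega : k < r) a b hab
  have hp1 : (1 : ℝ) ≤ p := by exact_mod_cast hp.one_lt.le
  rcases hp.eq_two_or_odd' with h | hodd
  · subst h
    by_cases hr8 : r ≤ 8
    · have h3 := klo_trivial (2 ^ r) a b
      rw [Nat.totient_prime_pow hp (by omega)] at h3
      have h4 : ‖klo (2 ^ r) a b‖ ≤ 2 ^ (r - 1) := by simpa using h3
      calc ‖klo (2 ^ r) a b‖ ^ 4 ≤ ((2 : ℝ) ^ (r - 1)) ^ 4 := by gcongr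
        _ = 2 ^ ((r - 1) * 4) := by rw [← pow_mul]
        _ ≤ 2 ^ (4 + r * 3) := pow_le_pow_right₀ (by norm_num) (by omega)
        _ = _ := by rw [pow_add, pow_mul]; norm_num
    · have h3 : (Finset.univ.filter fun x : ZMod (2 ^ r) =>
          ((2 : ℕ) : ZMod (2 ^ r)) ^ k * 2 * x = 0).card ≤ 2 ^ (k + 1) := by
        have := card_ann_s9 hp (by omega : k + 1 ≤ r)
        simpa [pow_succ] using this
      have h4 : ‖klo (2 ^ r) a b‖ ≤ 2 ^ (k + 2) := by
        refine h1.trans ?_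
        have : (2 : ℕ) * 2 ^ (k + 1) = 2 ^ (k + 2) := by ring
        exact_mod_cast h2.trans ((Nat.mul_le_mul_left 2 h3).trans this.le)
      calc ‖klo (2 ^ r) a b‖ ^ 4 ≤ ((2 : ℝ) ^ (k + 2)) ^ 4 := by gcongr
        _ = 2 ^ ((k + 2) * 4) := by rw [← pow_mul]
        _ ≤ 2 ^ (4 + r * 3) := pow_le_pow_right₀ (by norm_num) (by omega)
        _ = _ := by rw [pow_add, pow_mul]; norm_num
  · have hu2 : IsUnit (2 : ZMod (p ^ r)) := by
      have := (ZMod.isUnit_iff_coprime 2 (p ^ r)).2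
        (Nat.Coprime.pow_right _ (Nat.coprime_two_left.2 hodd))
      exact_mod_cast this
    have h3 : (Finset.univ.filter fun x : ZMod (p ^ r) =>
          (p : ZMod (p ^ r)) ^ k * 2 * x = 0).card ≤ p ^ k := by
      refine le_trans (Finset.card_le_card ?_) (card_ann_s9 hp (by omega : k ≤ r))
      intro x hx
      simp only [Finset.mem_filter, Finset.mem_univ, true_and] at hx ⊢
      rw [← hu2.mul_right_eq_zero]
      linear_combination hx
    have h4 : ‖klo (p ^ r) a b‖ ≤ 2 * (p : ℝ) ^ k := by
      refine h1.trans ?_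
      exact_mod_cast h2.trans (Nat.mul_le_mul_left 2 h3)
    calc ‖klo (p ^ r) a b‖ ^ 4 ≤ (2 * (p : ℝ) ^ k) ^ 4 := by gcongr
      _ = 16 * (p : ℝ) ^ (k * 4) := by rw [mul_pow, ← pow_mul]; norm_num
      _ ≤ 16 * (p : ℝ) ^ (r * 3) := by
          exact mul_le_mul_of_nonneg_left (pow_le_pow_right₀ hp1 (by omega)) (by norm_num)
      _ = _ := by rw [pow_mul]

/-! ### Fourth moment for prime modulus -/

lemma parseval (N : ℕ) [NeZero N] {I : Type} [Fintype I] (f g : I → ZMod N) :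
    ∑ cd : ZMod N × ZMod N, ‖∑ i, ZMod.stdAddChar (cd.1 * f i + cd.2 * g i)‖ ^ 2 =
      (N : ℝ) ^ 2 * ((Finset.univ.filter fun ij : I × I =>
        f ij.1 = f ij.2 ∧ g ij.1 = g ij.2).card : ℝ) := by
  classical
  have hc : ∀ cd : ZMod N × ZMod N,
      ((‖∑ i, ZMod.stdAddChar (cd.1 * f i + cd.2 * g i)‖ ^ 2 : ℝ) : ℂ) =
      ∑ ij : I × I, ZMod.stdAddChar (cd.1 * (f ij.1 - f ij.2)) *
        ZMod.stdAddChar (cd.2 * (g ij.1 - g ij.2)) := by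
    intro cd
    push_cast
    rw [← Complex.mul_conj', map_sum, Finset.sum_mul_sum, Fintype.sum_prod_type]
    refine Finset.sum_congr rfl fun i _ => Finset.sum_congr rfl fun j _ => ?_
    rw [← AddChar.map_neg_eq_conj, ← AddChar.map_add_eq_mul, ← AddChar.map_add_eq_mul]
    congr 1; ring
  have : ((∑ cd : ZMod N × ZMod N,
      ‖∑ i, ZMod.stdAddChar (cd.1 * f i + cd.2 * g i)‖ ^ 2 : ℝ) : ℂ) =
      (((N : ℝ) ^ 2 * ((Finset.univ.filter fun ij : I × I =>
        f ij.1 = f ij.2 ∧ g ij.1 = g ij.2).card : ℝ) : ℝ) : ℂ) := by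
    rw [Complex.ofReal_sum, Finset.sum_congr rfl (fun cd _ => hc cd), Finset.sum_comm,
      Finset.card_filter]
    push_cast
    rw [Finset.mul_sum]
    refine Finset.sum_congr rfl fun ij _ => ?_
    rw [Fintype.sum_prod_type]
    dsimp only
    rw [← Finset.sum_mul_sum, AddChar.sum_mulShift _ (ZMod.isPrimitive_stdAddChar N),
      AddChar.sum_mulShift _ (ZMod.isPrimitive_stdAddChar N)]
    simp only [sub_eq_zero, ZMod.card]
    split_ifs <;> simp_all [sq]
  exact_mod_cast this

lemma count_quad (p : ℕ) [Fact p.Prime] :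
    (Finset.univ.filter fun ij : ((ZMod p)ˣ × (ZMod p)ˣ) × ((ZMod p)ˣ × (ZMod p)ˣ) =>
      (ij.1.1 : ZMod p) + ij.1.2 = ij.2.1 + ij.2.2 ∧
      ((ij.1.1⁻¹ : (ZMod p)ˣ) : ZMod p) + (ij.1.2⁻¹ : (ZMod p)ˣ) =
        (ij.2.1⁻¹ : (ZMod p)ˣ) + (ij.2.2⁻¹ : (ZMod p)ˣ)).card ≤ 3 * (p - 1) ^ 2 := by
  classical
  have hU : (Finset.univ : Finset ((ZMod p)ˣ × (ZMod p)ˣ)).card = (p - 1) ^ 2 := by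
    rw [Finset.card_univ, Fintype.card_prod, ZMod.card_units]; ring
  let A : Finset (((ZMod p)ˣ × (ZMod p)ˣ) × ((ZMod p)ˣ × (ZMod p)ˣ)) := Finset.univ.image fun xy : (ZMod p)ˣ × (ZMod p)ˣ => ((xy.1, xy.2), (xy.1, xy.2))
  let B : Finset (((ZMod p)ˣ × (ZMod p)ˣ) × ((ZMod p)ˣ × (ZMod p)ˣ)) := Finset.univ.image fun xy : (ZMod p)ˣ × (ZMod p)ˣ => ((xy.1, xy.2), (xy.2, xy.1))
  let C : Finset (((ZMod p)ˣ × (ZMod p)ˣ) × ((ZMod p)ˣ × (ZMod p)ˣ)) := Finset.univ.image fun xy : (ZMod p)ˣ × (ZMod p)ˣ => ((xy.1, -xy.1), (xy.2, -xy.2))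
  have hA : A.card ≤ (p - 1) ^ 2 := hU ▸ Finset.card_image_le
  have hB : B.card ≤ (p - 1) ^ 2 := hU ▸ Finset.card_image_le
  have hC : C.card ≤ (p - 1) ^ 2 := hU ▸ Finset.card_image_le
  have hsub : (Finset.univ.filter fun ij : ((ZMod p)ˣ × (ZMod p)ˣ) × ((ZMod p)ˣ × (ZMod p)ˣ) =>
      (ij.1.1 : ZMod p) + ij.1.2 = ij.2.1 + ij.2.2 ∧
      ((ij.1.1⁻¹ : (ZMod p)ˣ) : ZMod p) + (ij.1.2⁻¹ : (ZMod p)ˣ) =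
        (ij.2.1⁻¹ : (ZMod p)ˣ) + (ij.2.2⁻¹ : (ZMod p)ˣ)) ⊆ A ∪ B ∪ C := by
    rintro ⟨⟨x, y⟩, ⟨z, w⟩⟩ h
    simp only [Finset.mem_filter, Finset.mem_univ, true_and] at h
    obtain ⟨h1, h2⟩ := h
    have hx := Units.mul_inv x
    have hy := Units.mul_inv y
    have hz := Units.mul_inv z
    have hw := Units.mul_inv w
    have h3 : ((x : ZMod p) + y) * (((z : ZMod p) - x) * (z - y)) = 0 := by
      simp only [Units.val_inv_eq_inv_val] at h2
      have hx0 := x.ne_zero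
      have hy0 := y.ne_zero
      have hz0 := z.ne_zero
      have hw0 := w.ne_zero
      have h4 : ((x : ZMod p) + y) * (z * w) = (z + w) * (x * y) := by
        field_simp at h2
        linear_combination h2
      have h5 : (w : ZMod p) = x + y - z := by linear_combination -h1
      rw [h5] at h4
      linear_combination -h4
    simp only [Finset.mem_union]
    rcases mul_eq_zero.1 h3 with h | h
    · right
      refine Finset.mem_image.2 ⟨(x, z), Finset.mem_univ _, ?_⟩
      have e1 : -x = y := Units.ext (by rw [Units.val_neg]; linear_combination -h)
      have e2 : -z = w := Units.ext (by rw [Units.val_neg]; linear_combination h1 - h)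
      simp [e1, e2]
    · left
      rcases mul_eq_zero.1 h with h | h
      · left
        have e1 : x = z := Units.ext (by linear_combination -h)
        have e2 : y = w := Units.ext (by linear_combination h1 + h)
        exact Finset.mem_image.2 ⟨(x, y), Finset.mem_univ _, by simp [e1, e2]⟩
      · right
        have e1 : y = z := Units.ext (by linear_combination -h)
        have e2 : x = w := Units.ext (by linear_combination h1 + h)
        exact Finset.mem_image.2 ⟨(x, y), Finset.mem_univ _, by simp [e1, e2]⟩
  calc _ ≤ (A ∪ B ∪ C).card := Finset.card_le_card hsub
    _ ≤ (A ∪ B).card + C.card := Finset.card_union_le _ _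
    _ ≤ A.card + B.card + C.card := by gcongr; exact Finset.card_union_le _ _
    _ ≤ _ := by omega

lemma klo_prime (p : ℕ) [Fact p.Prime] (a b : ZMod p) (hab : IsUnit a ∨ IsUnit b) :
    ‖klo p a b‖ ^ 4 ≤ 16 * (p : ℝ) ^ 3 := by
  classical
  have hp : p.Prime := Fact.out
  have hsq : ∀ cd : ZMod p × ZMod p, ‖klo p cd.1 cd.2‖ ^ 4 =
      ‖∑ i : (ZMod p)ˣ × (ZMod p)ˣ, ZMod.stdAddChar (cd.1 * ((i.1 : ZMod p) + (i.2 : ZMod p)) +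
        cd.2 * (((i.1⁻¹ : (ZMod p)ˣ) : ZMod p) + ((i.2⁻¹ : (ZMod p)ˣ) : ZMod p)))‖ ^ 2 := by
    intro cd
    rw [show ‖klo p cd.1 cd.2‖ ^ 4 = ‖klo p cd.1 cd.2 * klo p cd.1 cd.2‖ ^ 2 by
      rw [norm_mul]; ring]
    congr 2
    unfold klo
    rw [Finset.sum_mul_sum, Fintype.sum_prod_type]
    refine Finset.sum_congr rfl fun i _ => Finset.sum_congr rfl fun j _ => ?_
    rw [← AddChar.map_add_eq_mul]
    congr 1; ring
  have hmom : ∑ cd : ZMod p × ZMod p, ‖klo p cd.1 cd.2‖ ^ 4 ≤ (p : ℝ) ^ 2 * (3 * ((p : ℝ) - 1) ^ 2) := by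
    rw [Finset.sum_congr rfl (fun cd _ => hsq cd), parseval p
      (fun i : (ZMod p)ˣ × (ZMod p)ˣ => (i.1 : ZMod p) + i.2)
      (fun i : (ZMod p)ˣ × (ZMod p)ˣ => ((i.1⁻¹ : (ZMod p)ˣ) : ZMod p) + (i.2⁻¹ : (ZMod p)ˣ))]
    have h := count_quad p
    have h' : ((p - 1 : ℕ) : ℝ) = (p : ℝ) - 1 := by rw [Nat.cast_sub hp.one_lt.le]; simp
    rw [← h']
    gcongr
    exact_mod_cast h
  have horb : ((p : ℝ) - 1) * ‖klo p a b‖ ^ 4 ≤ ∑ cd : ZMod p × ZMod p, ‖klo p cd.1 cd.2‖ ^ 4 := by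
    let φ : (ZMod p)ˣ → ZMod p × ZMod p := fun w => (a * w, b * (w⁻¹ : (ZMod p)ˣ))
    have hinj : Function.Injective φ := by
      intro v w hvw
      have h1 : a * (v : ZMod p) = a * w := congrArg Prod.fst hvw
      have h2 : b * ((v⁻¹ : (ZMod p)ˣ) : ZMod p) = b * (w⁻¹ : (ZMod p)ˣ) := congrArg Prod.snd hvw
      rcases hab with h | h
      · exact Units.ext (h.mul_left_cancel h1)
      · exact inv_injective (Units.ext (h.mul_left_cancel h2))
    calc ((p : ℝ) - 1) * ‖klo p a b‖ ^ 4 = ∑ w : (ZMod p)ˣ, ‖klo p (φ w).1 (φ w).2‖ ^ 4 := by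
          simp only [φ, klo_scale]
          rw [Finset.sum_const, Finset.card_univ, ZMod.card_units, nsmul_eq_mul,
            Nat.cast_sub hp.one_lt.le]
          simp
      _ = ∑ cd ∈ Finset.univ.image φ, ‖klo p cd.1 cd.2‖ ^ 4 := by
          rw [Finset.sum_image (fun x _ y _ h => hinj h)]
      _ ≤ _ := Finset.sum_le_sum_of_subset_of_nonneg (Finset.subset_univ _)
          (fun _ _ _ => by positivity)
  have hp1 : (1 : ℝ) < p := by exact_mod_cast hp.one_lt
  have h := horb.trans hmom
  have h2 : ‖klo p a b‖ ^ 4 ≤ 3 * (p : ℝ) ^ 2 * (p - 1) := by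
    refine le_of_mul_le_mul_left (h.trans_eq ?_) (sub_pos.2 hp1)
    ring
  nlinarith [pow_pos (lt_trans zero_lt_one hp1) 2, pow_pos (lt_trans zero_lt_one hp1) 3]

lemma klo_unit {p r : ℕ} (hp : p.Prime) (hr : 1 ≤ r) [NeZero (p ^ r)]
    (a b : ZMod (p ^ r)) (hab : IsUnit a ∨ IsUnit b) :
    ‖klo (p ^ r) a b‖ ^ 4 ≤ 16 * ((p : ℝ) ^ r) ^ 3 := by
  rcases hr.eq_or_lt with h | h
  · have key : ∀ (N : ℕ) [NeZero N] (a b : ZMod N), N = p → (IsUnit a ∨ IsUnit b) →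
        ‖klo N a b‖ ^ 4 ≤ 16 * (p : ℝ) ^ 3 := by
      intro N _ a' b' hN hab'
      have : Fact N.Prime := ⟨hN ▸ hp⟩
      rw [← hN]
      exact klo_prime N a' b' hab'
    have := key (p ^ r) a b (by rw [← h, pow_one]) hab
    have e : (p : ℝ) ^ r = p := by rw [← h, pow_one]
    rwa [e]
  · exact klo_high hp h a b hab

/-! ### Reduction to the coprime case -/

lemma klo_reduce {p n s : ℕ} (hp : p.Prime) (hn : 1 ≤ n) [NeZero (p ^ (n + s))] [NeZero (p ^ n)]
    (c d : ℤ) :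
    klo (p ^ (n + s)) (((p : ℤ) ^ s * c : ℤ)) (((p : ℤ) ^ s * d : ℤ)) =
      (p : ℂ) ^ s * klo (p ^ n) (c : ZMod (p ^ n)) (d : ZMod (p ^ n)) := by
  classical
  have hdvd : p ^ n ∣ p ^ (n + s) := pow_dvd_pow _ (by omega)
  set π := ZMod.unitsMap hdvd with hπ
  have hterm : ∀ u : (ZMod (p ^ (n + s)))ˣ,
      ZMod.stdAddChar ((((p : ℤ) ^ s * c : ℤ) : ZMod (p ^ (n + s))) * (u : ZMod (p ^ (n + s))) +
        (((p : ℤ) ^ s * d : ℤ) : ZMod (p ^ (n + s))) *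
          ((u⁻¹ : (ZMod (p ^ (n + s)))ˣ) : ZMod (p ^ (n + s)))) =
      ZMod.stdAddChar ((c : ZMod (p ^ n)) * ((π u : (ZMod (p ^ n))ˣ) : ZMod (p ^ n)) +
        (d : ZMod (p ^ n)) * (((π u)⁻¹ : (ZMod (p ^ n))ˣ) : ZMod (p ^ n))) := by
    intro u
    rw [← map_inv]
    obtain ⟨x, hx⟩ := ZMod.intCast_surjective (u : ZMod (p ^ (n + s)))
    obtain ⟨y, hy⟩ := ZMod.intCast_surjective ((u⁻¹ : (ZMod (p ^ (n + s)))ˣ) : ZMod (p ^ (n + s)))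
    have hx' : ((π u : (ZMod (p ^ n))ˣ) : ZMod (p ^ n)) = (x : ZMod (p ^ n)) := by
      rw [hπ, ZMod.unitsMap_val, ← hx, ZMod.cast_intCast hdvd]
    have hy' : ((π u⁻¹ : (ZMod (p ^ n))ˣ) : ZMod (p ^ n)) = (y : ZMod (p ^ n)) := by
      rw [hπ, ZMod.unitsMap_val, ← hy, ZMod.cast_intCast hdvd]
    rw [hx', hy', ← hx, ← hy]
    have e1 : ((((p : ℤ) ^ s * c : ℤ) : ZMod (p ^ (n + s))) * (x : ZMod (p ^ (n + s))) +
        (((p : ℤ) ^ s * d : ℤ) : ZMod (p ^ (n + s))) * (y : ZMod (p ^ (n + s)))) =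
        (((p : ℤ) ^ s * (c * x + d * y) : ℤ) : ZMod (p ^ (n + s))) := by push_cast; ring
    have e2 : (c : ZMod (p ^ n)) * (x : ZMod (p ^ n)) + (d : ZMod (p ^ n)) * (y : ZMod (p ^ n)) =
        ((c * x + d * y : ℤ) : ZMod (p ^ n)) := by push_cast; ring
    rw [e1, e2, ZMod.stdAddChar_coe, ZMod.stdAddChar_coe]
    congr 1
    have hp0 : (p : ℂ) ≠ 0 := by exact_mod_cast hp.ne_zero
    push_cast
    rw [pow_add]
    field_simp
  have hsurj := ZMod.unitsMap_surjective hdvd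
  have hfib : ∀ v : (ZMod (p ^ n))ˣ, (Finset.univ.filter fun u => π u = v).card =
      (Finset.univ.filter fun u => π u = 1).card := fun v =>
    MonoidHom.card_fiber_eq_of_mem_range π (hsurj v) (hsurj 1)
  have hcard : (Finset.univ.filter fun u => π u = 1).card = p ^ s := by
    have h1 : Fintype.card (ZMod (p ^ (n + s)))ˣ = ∑ v : (ZMod (p ^ n))ˣ,
        (Finset.univ.filter fun u => π u = v).card := by
      rw [← Finset.card_univ]
      exact Finset.card_eq_sum_card_fiberwise (fun _ _ => Finset.mem_univ _)
    rw [Finset.sum_congr rfl (fun v _ => hfib v), Finset.sum_const, Finset.card_univ,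
      ZMod.card_units_eq_totient, ZMod.card_units_eq_totient, smul_eq_mul,
      Nat.totient_prime_pow hp (by omega), Nat.totient_prime_pow hp (by omega),
      show n + s - 1 = (n - 1) + s by omega, pow_add] at h1
    have hpos : 0 < p ^ (n - 1) * (p - 1) :=
      Nat.mul_pos (pow_pos hp.pos _) (Nat.sub_pos_of_lt hp.one_lt)
    refine (Nat.eq_of_mul_eq_mul_left hpos ?_).symm
    rw [← h1]; ring
  unfold klo
  rw [Finset.sum_congr rfl (fun u _ => hterm u), ← Finset.sum_fiberwise Finset.univ π, Finset.mul_sum]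
  refine Finset.sum_congr rfl fun v _ => ?_
  rw [Finset.sum_congr rfl (g := fun _ => ZMod.stdAddChar ((c : ZMod (p ^ n)) * (v : ZMod (p ^ n)) +
        (d : ZMod (p ^ n)) * ((v⁻¹ : (ZMod (p ^ n))ˣ) : ZMod (p ^ n))))
      (fun u hu => by rw [(Finset.mem_filter.1 hu).2]),
    Finset.sum_const, hfib, hcard, nsmul_eq_mul]
  push_cast
  rfl

lemma sum_eq_klo {p r : ℕ} (hp : p.Prime) (hr : 1 ≤ r) [NeZero (p ^ r)] (c d : ℤ) :
    ∑ b ∈ (Finset.Icc 1 (p ^ r)).filter (fun b => Nat.gcd b p = 1),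
        eChar (p ^ r) (c * b + d * (((b : ZMod (p ^ r))⁻¹).val : ℤ)) =
      klo (p ^ r) (c : ZMod (p ^ r)) (d : ZMod (p ^ r)) := by
  have hq : 1 < p ^ r := Nat.one_lt_pow (by omega) hp.one_lt
  have : Fact (1 < p ^ r) := ⟨hq⟩
  have hcop : ∀ b ∈ (Finset.Icc 1 (p ^ r)).filter (fun b => Nat.gcd b p = 1),
      Nat.Coprime b (p ^ r) := fun b hb => Nat.Coprime.pow_right _ (Finset.mem_filter.1 hb).2
  unfold klo
  refine Finset.sum_bij' (fun b hb => ZMod.unitOfCoprime b (hcop b hb))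
    (fun u _ => (u : ZMod (p ^ r)).val) (fun _ _ => Finset.mem_univ _) ?_ ?_ ?_ ?_
  · intro u _
    have h := ZMod.val_coe_unit_coprime u
    refine Finset.mem_filter.2 ⟨Finset.mem_Icc.2 ⟨?_, (ZMod.val_lt _).le⟩, ?_⟩
    · rcases Nat.eq_zero_or_pos (u : ZMod (p ^ r)).val with h0 | h0
      · exact absurd ((ZMod.val_eq_zero _).1 h0) u.ne_zero
      · exact h0
    · exact Nat.Coprime.coprime_dvd_right (dvd_pow_self p (by omega)) h
  · intro b hb
    simp only [ZMod.coe_unitOfCoprime]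
    rw [ZMod.val_natCast, Nat.mod_eq_of_lt]
    refine lt_of_le_of_ne (Finset.mem_Icc.1 (Finset.mem_filter.1 hb).1).2 ?_
    intro h
    have := hcop b hb
    rw [h, Nat.coprime_self] at this
    omega
  · intro u _
    apply Units.ext
    simp
  · intro b hb
    rw [← ZMod.inv_coe_unit, ZMod.coe_unitOfCoprime]
    unfold eChar
    rw [← ZMod.stdAddChar_coe]
    congr 1
    push_cast
    simp

lemma klo_int {p r : ℕ} (hp : p.Prime) (hr : 1 ≤ r) [NeZero (p ^ r)] (c d : ℤ) :
    ‖klo (p ^ r) (c : ZMod (p ^ r)) (d : ZMod (p ^ r))‖ ^ 4 ≤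
      16 * ((p : ℝ) ^ r) ^ 3 * (Nat.gcd (p ^ r) (Int.gcd c d) : ℝ) := by
  obtain ⟨s, hs, hg⟩ := (Nat.dvd_prime_pow hp).1 (Nat.gcd_dvd_left (p ^ r) (Int.gcd c d))
  rw [hg]
  have hp0 : (0 : ℝ) < p := by exact_mod_cast hp.pos
  rcases hs.eq_or_lt with h | h
  · subst h
    have h1 : ‖klo (p ^ s) (c : ZMod (p ^ s)) (d : ZMod (p ^ s))‖ ≤ (p : ℝ) ^ s := by
      refine (klo_trivial _ _ _).trans ?_
      exact_mod_cast Nat.totient_le _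
    calc _ ≤ ((p : ℝ) ^ s) ^ 4 := by gcongr
      _ ≤ 16 * ((p : ℝ) ^ s) ^ 3 * ((p : ℝ) ^ s) := by
          have : 0 < ((p : ℝ) ^ s) ^ 4 := by positivity
          nlinarith
      _ = _ := by push_cast; ring
  · obtain ⟨n, rfl⟩ : ∃ n, r = n + s := ⟨r - s, by omega⟩
    have hn : 1 ≤ n := by omega
    have : NeZero (p ^ n) := ⟨pow_ne_zero _ hp.ne_zero⟩
    have hgd : p ^ s ∣ Int.gcd c d := hg ▸ Nat.gcd_dvd_right _ _
    have hgd' : ((p : ℤ) ^ s) ∣ (Int.gcd c d : ℤ) := by exact_mod_cast hgd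
    obtain ⟨c', hc⟩ := hgd'.trans (Int.gcd_dvd_left c d)
    obtain ⟨d', hd⟩ := hgd'.trans (Int.gcd_dvd_right c d)
    have hnot : ¬ ((p : ℤ) ∣ c' ∧ (p : ℤ) ∣ d') := by
      rintro ⟨h1, h2⟩
      have h3 : ((p : ℤ) ^ (s + 1)) ∣ (Int.gcd c d : ℤ) := by
        rw [Int.dvd_coe_gcd_iff, hc, hd, pow_succ]
        exact ⟨mul_dvd_mul_left _ h1, mul_dvd_mul_left _ h2⟩
      have h4 : p ^ (s + 1) ∣ Int.gcd c d := by exact_mod_cast h3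
      have h5 : p ^ (s + 1) ∣ p ^ s := hg ▸ Nat.dvd_gcd (pow_dvd_pow _ (by omega)) h4
      rw [Nat.pow_dvd_pow_iff_le_right hp.one_lt] at h5
      omega
    have hunit : ∀ z : ℤ, ¬ (p : ℤ) ∣ z → IsUnit (z : ZMod (p ^ n)) := by
      intro z hz
      by_contra hnu
      obtain ⟨t, ht⟩ := dvd_of_not_isUnit hp _ hnu
      obtain ⟨t, rfl⟩ := ZMod.intCast_surjective t
      have h1 : ((z - p * t : ℤ) : ZMod (p ^ n)) = 0 := by push_cast; rw [ht]; ring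
      rw [ZMod.intCast_zmod_eq_zero_iff_dvd] at h1
      have h2 : (p : ℤ) ∣ z - p * t := by
        refine dvd_trans ?_ h1
        push_cast
        exact dvd_pow_self _ (by omega)
      exact hz ((dvd_sub_left (dvd_mul_right _ _)).1 h2)
    have hab : IsUnit (c' : ZMod (p ^ n)) ∨ IsUnit (d' : ZMod (p ^ n)) := by
      by_cases h1 : (p : ℤ) ∣ c'
      · exact Or.inr (hunit _ fun h2 => hnot ⟨h1, h2⟩)
      · exact Or.inl (hunit _ h1)
    rw [hc, hd, klo_reduce hp hn, norm_mul, mul_pow]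
    have := klo_unit hp hn (c' : ZMod (p ^ n)) (d' : ZMod (p ^ n)) hab
    have h6 : ‖(p : ℂ) ^ s‖ = (p : ℝ) ^ s := by simp
    rw [h6]
    calc _ ≤ ((p : ℝ) ^ s) ^ 4 * (16 * ((p : ℝ) ^ n) ^ 3) := by gcongr
      _ = _ := by push_cast; rw [pow_add]; ring

/-- Elementary Kloosterman sum bound: for `q = p^r`,
`|∑_{(b,p)=1} e_q(cb + d b̄)| ≤ 2 q^{3/4} gcd(q,c,d)^{1/4}`. -/
theorem kloosterman_sum_bound (p : ℕ) (hp : p.Prime) (r : ℕ) (hr : 1 ≤ r) (c d : ℤ) :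
    norm (∑ b ∈ (Finset.Icc 1 (p ^ r)).filter (fun b => Nat.gcd b p = 1),
        eChar (p ^ r) (c * b + d * (((b : ZMod (p ^ r))⁻¹).val : ℤ)))
      ≤ 2 * ((p : ℝ) ^ r) ^ ((3 : ℝ) / 4) *
          ((Nat.gcd (p ^ r) (Int.gcd c d) : ℝ)) ^ ((1 : ℝ) / 4) := by
  have : NeZero (p ^ r) := ⟨pow_ne_zero _ hp.ne_zero⟩
  rw [sum_eq_klo hp hr]
  refine le_of_pow_le_pow_left₀ (n := 4) (by norm_num) (by positivity) ?_
  refine (klo_int hp hr c d).trans_eq ?_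
  rw [mul_pow, mul_pow, ← Real.rpow_natCast (((p : ℝ) ^ r) ^ ((3 : ℝ) / 4)),
    ← Real.rpow_natCast ((Nat.gcd (p ^ r) (Int.gcd c d) : ℝ) ^ ((1 : ℝ) / 4)),
    ← Real.rpow_mul (by positivity), ← Real.rpow_mul (by positivity)]
  norm_num
end

section
/- There is an absolute constant C (one may take C = 2) such that for every odd prime p, every integer r ≥ 1 with q = p^r, and all integers c, d: |∑_{b=1, gcd(b,p)=1}^{q} (b/p) · e_q(c b + d b*)| ≤ C · q^{3/4} · gcd(q, c, d)^{1/4}, where (b/p) is the Legendre symbol and b* denotes the multiplicative inverse of b modulo q. -/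
open Finset ComplexConjugate

lemma plancherel_count (p : ℕ) [NeZero p] {ι : Type} [Fintype ι] [DecidableEq ι]
    (w : ι → ℂ) (hw : ∀ i, ‖w i‖ ≤ 1) (s m : ι → ZMod p) :
    ∑ c : ZMod p, ∑ d : ZMod p,
      ‖∑ i, w i * (ZMod.stdAddChar (c * s i + d * m i) : ℂ)‖ ^ 2 ≤
      (p : ℝ) ^ 2 * (((univ : Finset (ι × ι)).filter
        (fun ij => w ij.1 ≠ 0 ∧ w ij.2 ≠ 0 ∧ s ij.1 = s ij.2 ∧ m ij.1 = m ij.2)).card : ℝ) := by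
  classical
  have key : ((∑ c : ZMod p, ∑ d : ZMod p,
      ‖∑ i, w i * (ZMod.stdAddChar (c * s i + d * m i) : ℂ)‖ ^ 2 : ℝ) : ℂ) =
      ∑ ij : ι × ι, w ij.1 * conj (w ij.2) *
        ((∑ c : ZMod p, ZMod.stdAddChar (c * (s ij.1 - s ij.2))) *
         (∑ d : ZMod p, ZMod.stdAddChar (d * (m ij.1 - m ij.2)))) := by
    push_cast
    have h1 : ∀ c d : ZMod p,
        ((‖∑ i, w i * (ZMod.stdAddChar (c * s i + d * m i) : ℂ)‖ : ℝ) : ℂ) ^ 2 =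
        ∑ ij : ι × ι, w ij.1 * conj (w ij.2) *
          (ZMod.stdAddChar (c * (s ij.1 - s ij.2)) * ZMod.stdAddChar (d * (m ij.1 - m ij.2))) := by
      intro c d
      rw [← Complex.mul_conj', map_sum, Fintype.sum_mul_sum, Fintype.sum_prod_type]
      refine Finset.sum_congr rfl fun i _ => Finset.sum_congr rfl fun j _ => ?_
      simp only
      rw [map_mul, ← AddChar.map_neg_eq_conj, ← AddChar.map_add_eq_mul _ (c * (s i - s j))]
      have : c * (s i - s j) + d * (m i - m j) = (c * s i + d * m i) + -(c * s j + d * m j) := by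
        ring
      rw [this, AddChar.map_add_eq_mul _ (c * s i + d * m i)]
      ring
    simp_rw [h1]
    simp_rw [Finset.sum_mul_sum, Finset.mul_sum]
    rw [Finset.sum_comm' (t' := univ) (s' := fun _ => univ) (by simp)]
    conv_lhs => enter [2, d]; rw [Finset.sum_comm]
    rw [Finset.sum_comm]
    refine Finset.sum_congr rfl fun ij _ => ?_
    rw [Finset.sum_comm]
  have hnn : (0:ℝ) ≤ ∑ c : ZMod p, ∑ d : ZMod p,
      ‖∑ i, w i * (ZMod.stdAddChar (c * s i + d * m i) : ℂ)‖ ^ 2 := by positivity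
  rw [← abs_of_nonneg hnn, ← Real.norm_eq_abs, ← Complex.norm_real, key]
  refine (norm_sum_le _ _).trans ?_
  rw [Finset.card_filter]
  push_cast
  rw [Finset.mul_sum]
  refine Finset.sum_le_sum fun ij _ => ?_
  have hp := ZMod.isPrimitive_stdAddChar p
  rw [AddChar.sum_mulShift _ hp, AddChar.sum_mulShift _ hp]
  by_cases h1 : s ij.1 = s ij.2
  · by_cases h2 : m ij.1 = m ij.2
    · by_cases h3 : w ij.1 = 0
      · simp [h3]
      by_cases h4 : w ij.2 = 0
      · simp [h4]
      simp only [h1, h2, h3, h4, sub_self, if_true, ZMod.card, norm_mul, RCLike.norm_conj,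
        Complex.norm_natCast, ne_eq, not_false_eq_true, and_self]
      have := mul_le_one₀ (hw ij.1) (norm_nonneg _) (hw ij.2)
      nlinarith [sq_nonneg (p:ℝ)]
    · simp [h1, h2, sub_eq_zero]
  · simp [h1, sub_eq_zero]

lemma quad_count (p : ℕ) [Fact p.Prime] (S : Finset ((ZMod p × ZMod p) × (ZMod p × ZMod p)))
    (hS : ∀ a ∈ S, (a.1.1 ≠ 0 ∧ a.1.2 ≠ 0) ∧ (a.2.1 ≠ 0 ∧ a.2.2 ≠ 0) ∧
      a.1.1 + a.1.2 = a.2.1 + a.2.2 ∧ a.1.1⁻¹ + a.1.2⁻¹ = a.2.1⁻¹ + a.2.2⁻¹) :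
    S.card ≤ 3 * p ^ 2 := by
  classical
  have hsub : S ⊆ (univ : Finset (ZMod p × ZMod p)).image (fun u => ((u.1, -u.1), (u.2, -u.2))) ∪
      ((univ : Finset (ZMod p × ZMod p)).image (fun u => ((u.1, u.2), (u.1, u.2))) ∪
      (univ : Finset (ZMod p × ZMod p)).image (fun u => ((u.1, u.2), (u.2, u.1)))) := by
    rintro ⟨⟨x, y⟩, ⟨z, w⟩⟩ ha
    obtain ⟨⟨hx, hy⟩, ⟨hz, hw⟩, h1, h2⟩ := hS _ ha
    simp only at hx hy hz hw h1 h2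
    have hw' : w = x + y - z := by rw [h1]; ring
    have h3 : (x + y) * ((z - x) * (z - y)) = 0 := by
      field_simp at h2
      have : (x + y) * (z * w) = (z + w) * (x * y) := by linear_combination h2
      rw [hw'] at this
      linear_combination -this
    simp only [mem_union, mem_image, mem_univ, true_and, Prod.mk.injEq, Prod.exists]
    rcases mul_eq_zero.1 h3 with h | h
    · left
      exact ⟨x, z, ⟨rfl, by linear_combination -h⟩, rfl, by rw [hw']; linear_combination -h⟩
    · rcases mul_eq_zero.1 h with h | h
      · right; left
        exact ⟨x, y, ⟨rfl, rfl⟩, by linear_combination -h, by rw [hw']; linear_combination h⟩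
      · right; right
        exact ⟨x, y, ⟨rfl, rfl⟩, by linear_combination -h, by rw [hw']; linear_combination h⟩
  have hc : (univ : Finset (ZMod p × ZMod p)).card = p ^ 2 := by
    simp [ZMod.card, sq]
  refine (card_le_card hsub).trans ((card_union_le _ _).trans ?_)
  refine (Nat.add_le_add card_image_le ((card_union_le _ _).trans
    (Nat.add_le_add card_image_le card_image_le))).trans ?_
  rw [hc]; omega

lemma prime_bound (p : ℕ) [Fact p.Prime] (χ : ZMod p → ℂ) (h0 : χ 0 = 0)
    (h1 : ∀ x, x ≠ 0 → ‖χ x‖ = 1) (hmul : ∀ x y, χ (x * y) = χ x * χ y)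
    (c d : ZMod p) (hcd : c ≠ 0 ∨ d ≠ 0) :
    ‖∑ x : ZMod p, χ x * (ZMod.stdAddChar (c * x + d * x⁻¹) : ℂ)‖ ^ 4 ≤ 16 * (p : ℝ) ^ 3 := by
  classical
  set f : ZMod p → ZMod p → ℂ := fun c d =>
    ∑ x : ZMod p, χ x * (ZMod.stdAddChar (c * x + d * x⁻¹) : ℂ) with hf
  change ‖f c d‖ ^ 4 ≤ _
  have hle : ∀ x, ‖χ x‖ ≤ 1 := fun x => by
    by_cases hx : x = 0
    · simp [hx, h0]
    · exact (h1 x hx).le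
  have hne : ∀ x, χ x ≠ 0 → x ≠ 0 := fun x hx h => hx (h ▸ h0)
  -- fourth moment
  have hmom : ∑ c : ZMod p, ∑ d : ZMod p, ‖f c d‖ ^ 4 ≤ (p:ℝ) ^ 2 * (3 * (p:ℝ) ^ 2) := by
    have h := plancherel_count p (fun i : ZMod p × ZMod p => χ i.1 * χ i.2)
      (fun i => by rw [norm_mul]; exact mul_le_one₀ (hle _) (norm_nonneg _) (hle _))
      (fun i => i.1 + i.2) (fun i => i.1⁻¹ + i.2⁻¹)
    have e : ∀ c d : ZMod p, ∑ i : ZMod p × ZMod p, χ i.1 * χ i.2 *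
        (ZMod.stdAddChar (c * (i.1 + i.2) + d * (i.1⁻¹ + i.2⁻¹)) : ℂ) = f c d * f c d := by
      intro c d
      rw [hf, Fintype.sum_mul_sum, Fintype.sum_prod_type]
      refine Finset.sum_congr rfl fun x _ => Finset.sum_congr rfl fun y _ => ?_
      have : c * (x + y) + d * (x⁻¹ + y⁻¹) = (c * x + d * x⁻¹) + (c * y + d * y⁻¹) := by ring
      simp only
      rw [this, AddChar.map_add_eq_mul]; ring
    simp only [e] at h
    have e2 : ∀ c d, ‖f c d‖ ^ 4 = ‖f c d * f c d‖ ^ 2 := fun c d => by rw [norm_mul]; ring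
    simp only [e2]
    refine h.trans ?_
    gcongr
    have := quad_count p (S := (univ : Finset ((ZMod p × ZMod p) × (ZMod p × ZMod p))).filter
      (fun ij => χ ij.1.1 * χ ij.1.2 ≠ 0 ∧ χ ij.2.1 * χ ij.2.2 ≠ 0 ∧
        ij.1.1 + ij.1.2 = ij.2.1 + ij.2.2 ∧ ij.1.1⁻¹ + ij.1.2⁻¹ = ij.2.1⁻¹ + ij.2.2⁻¹)) (by
        intro a ha
        simp only [mem_filter, mem_univ, true_and] at ha
        obtain ⟨a1, a2, a3, a4⟩ := ha
        exact ⟨⟨hne _ (left_ne_zero_of_mul a1), hne _ (right_ne_zero_of_mul a1)⟩,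
          ⟨hne _ (left_ne_zero_of_mul a2), hne _ (right_ne_zero_of_mul a2)⟩, a3, a4⟩)
    exact_mod_cast this
  -- invariance
  have hinv : ∀ u : (ZMod p)ˣ, ‖f (c * u) (d * (u : ZMod p)⁻¹)‖ = ‖f c d‖ := by
    intro u
    have hu : (u : ZMod p) ≠ 0 := u.ne_zero
    have : f c d = χ u * f (c * u) (d * (u : ZMod p)⁻¹) := by
      rw [hf]
      simp only
      rw [Finset.mul_sum]
      symm
      refine Fintype.sum_bijective (fun x => (u : ZMod p) * x) (mulLeft_bijective₀ _ hu) _ _ ?_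
      intro x
      rw [hmul, mul_inv]
      rw [← mul_assoc (χ u), ← mul_assoc c, ← mul_assoc d]
    rw [this, norm_mul, h1 _ hu, one_mul]
  have hinj : Function.Injective (fun u : (ZMod p)ˣ => ((c * u, d * (u : ZMod p)⁻¹) : ZMod p × ZMod p)) := by
    intro u v huv
    simp only [Prod.mk.injEq] at huv
    ext
    rcases hcd with h | h
    · exact mul_left_cancel₀ h huv.1
    · exact inv_injective (mul_left_cancel₀ h huv.2)
  have hlow : ((p:ℝ) - 1) * ‖f c d‖ ^ 4 ≤ ∑ c : ZMod p, ∑ d : ZMod p, ‖f c d‖ ^ 4 := by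
    have e1 : ∑ c : ZMod p, ∑ d : ZMod p, ‖f c d‖ ^ 4 =
      ∑ v : ZMod p × ZMod p, ‖f v.1 v.2‖ ^ 4 := by rw [Fintype.sum_prod_type]
    have e2 : ((p:ℝ) - 1) * ‖f c d‖ ^ 4 = ∑ v ∈ (univ : Finset (ZMod p)ˣ).image
        (fun u : (ZMod p)ˣ => ((c * u, d * (u : ZMod p)⁻¹) : ZMod p × ZMod p)),
          ‖f v.1 v.2‖ ^ 4 := by
      rw [Finset.sum_image (fun a _ b _ h => hinj h)]
      simp only [hinv]
      rw [Finset.sum_const, card_univ, ZMod.card_units, nsmul_eq_mul,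
        Nat.cast_sub (Fact.out : p.Prime).one_le, Nat.cast_one]
    rw [e1, e2]
    exact Finset.sum_le_sum_of_subset_of_nonneg (subset_univ _) (fun _ _ _ => by positivity)
  have hp2 : (2:ℝ) ≤ p := by exact_mod_cast (Fact.out : p.Prime).two_le
  have h3 := hlow.trans hmom
  by_contra hcon
  push Not at hcon
  have : ((p:ℝ) - 1) * (16 * (p:ℝ)^3) ≤ (p:ℝ) ^ 2 * (3 * (p:ℝ) ^ 2) :=
    (mul_le_mul_of_nonneg_left hcon.le (by linarith)).trans h3
  nlinarith [pow_pos (show (0:ℝ) < p by linarith) 3]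

lemma stat_phase (n : ℕ) [NeZero n] (χ : ZMod n → ℂ) (π c d : ZMod n) (hπ : π * π = 0)
    (hle : ∀ x, ‖χ x‖ ≤ 1) (hunit : ∀ x, χ x ≠ 0 → IsUnit x)
    (hper : ∀ x t, χ (x * (1 + π * t)) = χ x) :
    ‖∑ x : ZMod n, χ x * (ZMod.stdAddChar (c * x + d * x⁻¹) : ℂ)‖ ≤
      (((univ : Finset (ZMod n)).filter
        (fun x => IsUnit x ∧ π * (c * x - d * x⁻¹) = 0)).card : ℝ) := by
  classical
  set T : ℂ := ∑ x : ZMod n, χ x * (ZMod.stdAddChar (c * x + d * x⁻¹) : ℂ) with hT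
  have hshift : ∀ t : ZMod n, T = ∑ x : ZMod n, χ x * (ZMod.stdAddChar (c * x + d * x⁻¹) : ℂ) *
      ZMod.stdAddChar (t * (π * (c * x - d * x⁻¹))) := by
    intro t
    have hu1 : (1 + π * t) * (1 - π * t) = 1 := by linear_combination -t ^ 2 * hπ
    rw [hT]
    symm
    have hbij : Function.Bijective (fun x : ZMod n => x * (1 + π * t)) := by
      refine Function.bijective_iff_has_inverse.2 ⟨fun x => x * (1 - π * t), ?_, ?_⟩
      · intro x
        simp only
        rw [mul_assoc, hu1, mul_one]
      · intro x
        simp only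
        rw [mul_assoc, mul_comm (1 - π * t), hu1, mul_one]
    refine Fintype.sum_bijective _ hbij _ _ fun x => ?_
    symm
    rw [hper]
    by_cases hx : χ x = 0
    · simp [hx]
    have hxu := hunit x hx
    have hinv : (x * (1 + π * t))⁻¹ = x⁻¹ * (1 - π * t) := by
      apply ZMod.inv_eq_of_mul_eq_one
      have := ZMod.mul_inv_of_unit x hxu
      linear_combination this * (1 + π * t) * (1 - π * t) + hu1
    rw [hinv, mul_assoc, ← AddChar.map_add_eq_mul]
    congr 2
    ring
  have hsum : (n : ℂ) * T = ∑ x : ZMod n, χ x * (ZMod.stdAddChar (c * x + d * x⁻¹) : ℂ) *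
      (if π * (c * x - d * x⁻¹) = 0 then (n : ℂ) else 0) := by
    have : (n : ℂ) * T = ∑ t : ZMod n, T := by simp [ZMod.card]
    rw [this]
    conv_lhs => enter [2, t]; rw [hshift t]
    rw [Finset.sum_comm]
    refine Finset.sum_congr rfl fun x _ => ?_
    rw [← Finset.mul_sum, AddChar.sum_mulShift _ (ZMod.isPrimitive_stdAddChar n), ZMod.card]
    push_cast
    rfl
  have hn : (0:ℝ) < n := by exact_mod_cast Nat.pos_of_ne_zero (NeZero.ne n)
  have h2 : (n : ℝ) * ‖T‖ ≤ n * (((univ : Finset (ZMod n)).filter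
        (fun x => IsUnit x ∧ π * (c * x - d * x⁻¹) = 0)).card : ℝ) := by
    have : (n : ℝ) * ‖T‖ = ‖(n : ℂ) * T‖ := by rw [norm_mul, Complex.norm_natCast]
    rw [this, hsum]
    refine (norm_sum_le _ _).trans ?_
    rw [Finset.card_filter]
    push_cast
    rw [Finset.mul_sum]
    refine Finset.sum_le_sum fun x _ => ?_
    by_cases hx : χ x = 0
    · simp only [hx, zero_mul, norm_zero]; split_ifs <;> simp
    have hxu := hunit x hx
    by_cases h : π * (c * x - d * x⁻¹) = 0
    · simp only [hxu, h, and_self, if_true, norm_mul, Complex.norm_natCast, AddChar.norm_apply]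
      nlinarith [hle x]
    · simp [h]
  exact le_of_mul_le_mul_left h2 hn

lemma nonunit_eq (p r : ℕ) (hp : p.Prime) (hr : 1 ≤ r) (x : ZMod (p ^ r)) (hx : ¬ IsUnit x) :
    ∃ y, x = p * y := by
  have : NeZero (p ^ r) := ⟨(pow_pos hp.pos r).ne'⟩
  rw [← ZMod.natCast_zmod_val x, ZMod.isUnit_natCast_iff_not_dvd_pow hp hr, not_not] at hx
  obtain ⟨k, hk⟩ := hx
  exact ⟨k, by rw [← Nat.cast_mul, ← hk, ZMod.natCast_zmod_val]⟩

lemma dvd_of_pow_mul (p r : ℕ) (hp : p.Prime) (hr : 1 ≤ r) (e : ℤ)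
    (h : (p : ZMod (p ^ r)) ^ (r - 1) * (e : ZMod (p ^ r)) = 0) : (p : ℤ) ∣ e := by
  have : (((p : ℤ) ^ (r - 1) * e : ℤ) : ZMod (p ^ r)) = 0 := by push_cast; exact h
  rw [ZMod.intCast_zmod_eq_zero_iff_dvd] at this
  obtain ⟨s, rfl⟩ : ∃ s, r = s + 1 := ⟨r - 1, by omega⟩
  simp only [Nat.add_sub_cancel] at this
  push_cast at this
  rw [pow_succ] at this
  exact (mul_dvd_mul_iff_left (pow_ne_zero _ (by exact_mod_cast hp.ne_zero))).1 this

lemma ker_count (p r k : ℕ) [NeZero (p ^ r)] (hp : p.Prime) (hk : k ≤ r) (a : ZMod (p ^ r)) :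
    ((univ : Finset (ZMod (p ^ r))).filter
      (fun z => (p : ZMod (p ^ r)) ^ (r - k) * (z + a) = 0)).card ≤ p ^ (r - k) := by
  classical
  have hsplit : p ^ r = p ^ (r - k) * p ^ k := by rw [← pow_add]; congr 1; omega
  have hdvd : ∀ z : ZMod (p ^ r), (p : ZMod (p ^ r)) ^ (r - k) * z = 0 → p ^ k ∣ z.val := by
    intro z hz
    have : ((p ^ (r - k) * z.val : ℕ) : ZMod (p ^ r)) = 0 := by
      push_cast; rw [ZMod.natCast_zmod_val]; exact hz
    rw [ZMod.natCast_eq_zero_iff] at this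
    exact Nat.dvd_of_mul_dvd_mul_left (pow_pos hp.pos _) (hsplit.symm.dvd.trans this : p ^ (r - k) * p ^ k ∣ _)
  calc _ ≤ (range (p ^ (r - k))).card := by
        refine Finset.card_le_card_of_injOn (fun z => (z + a).val / p ^ k) ?_ ?_
        · intro z hz
          simp only [coe_range, Set.mem_Iio]
          apply Nat.div_lt_of_lt_mul
          rw [mul_comm, ← hsplit]
          exact ZMod.val_lt _
        · intro z hz w hw h
          simp only [coe_filter, mem_univ, true_and, Set.mem_ofPred_eq] at hz hw
          have h' : (z + a).val = (w + a).val := by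
            rw [← Nat.div_mul_cancel (hdvd _ hz), ← Nat.div_mul_cancel (hdvd _ hw)]
            simp only at h
            rw [h]
          exact add_right_cancel (ZMod.val_injective _ h')
    _ = _ := card_range _

lemma sol_count (p r k : ℕ) [NeZero (p ^ r)] (hp : p.Prime) (hodd : Odd p) (hk1 : 1 ≤ k) (hk : k ≤ r)
    (c d : ℤ) (hcd : ¬ ((p : ℤ) ∣ c ∧ (p : ℤ) ∣ d)) :
    ((univ : Finset (ZMod (p ^ r))).filter (fun x => IsUnit x ∧
      (p : ZMod (p ^ r)) ^ (r - k) * ((c : ZMod (p ^ r)) * x - (d : ZMod (p ^ r)) * x⁻¹) = 0)).card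
      ≤ 2 * p ^ (r - k) := by
  classical
  set R := ZMod (p ^ r)
  have hr : 1 ≤ r := hk1.trans hk
  have hpr : (p : R) ^ r = 0 := by
    have := ZMod.natCast_self (p ^ r); push_cast at this; exact this
  have : Fact (1 < p ^ r) := ⟨Nat.one_lt_pow (by omega) hp.one_lt⟩
  have hpn : ∀ y : R, ¬ IsUnit ((p : R) * y) := by
    intro y hy
    have := (isUnit_of_mul_isUnit_left hy).pow r
    rw [hpr] at this
    exact not_isUnit_zero this
  have e1 : (p : R) ^ (k - 1) * (p : R) ^ (r - k) = (p : R) ^ (r - 1) := by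
    rw [← pow_add]; congr 1; omega
  have e2 : (p : R) ^ (r - 1) * p = 0 := by
    rw [← pow_succ, Nat.sub_add_cancel hr, hpr]
  rcases Finset.eq_empty_or_nonempty ((univ : Finset R).filter (fun x => IsUnit x ∧
      (p : R) ^ (r - k) * ((c : R) * x - (d : R) * x⁻¹) = 0)) with h | ⟨x0, hx0⟩
  · rw [h]; simp
  simp only [mem_filter, mem_univ, true_and] at hx0
  obtain ⟨hu0, hs0⟩ := hx0
  have hsq : ∀ x : R, IsUnit x → (p : R) ^ (r - k) * ((c : R) * x - (d : R) * x⁻¹) = 0 →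
      (p : R) ^ (r - k) * (d : R) = (p : R) ^ (r - k) * (c * x ^ 2) := by
    intro x hx h
    have := ZMod.mul_inv_of_unit x hx
    linear_combination -x * h - (p : R) ^ (r - k) * d * this
  have h0 := hsq x0 hu0 hs0
  have hcu : IsUnit (c : R) := by
    by_contra hc
    obtain ⟨z, hz⟩ := nonunit_eq p r hp hr _ hc
    refine hcd ⟨dvd_of_pow_mul p r hp hr c ?_, dvd_of_pow_mul p r hp hr d ?_⟩
    · change (p : R) ^ (r - 1) * (c : R) = 0
      rw [hz]; linear_combination z * e2
    · change (p : R) ^ (r - 1) * (d : R) = 0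
      rw [hz] at h0
      linear_combination (p : R) ^ (k - 1) * h0 + (p * z * x0 ^ 2 - d) * e1 + z * x0 ^ 2 * e2
  have h2u : IsUnit (2 : R) := by
    have := (ZMod.isUnit_natCast_iff_not_dvd_pow (a := 2) hp hr).2 (by
      intro h
      have := (Nat.prime_dvd_prime_iff_eq hp Nat.prime_two).1 h
      subst this
      exact absurd hodd (by decide))
    exact_mod_cast this
  have hsub : ((univ : Finset R).filter (fun x => IsUnit x ∧
      (p : R) ^ (r - k) * ((c : R) * x - (d : R) * x⁻¹) = 0)) ⊆
      (univ : Finset R).filter (fun z => (p : R) ^ (r - k) * (z + x0) = 0) ∪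
      (univ : Finset R).filter (fun z => (p : R) ^ (r - k) * (z + (-x0)) = 0) := by
    intro y hy
    simp only [mem_filter, mem_univ, true_and, mem_union] at hy ⊢
    obtain ⟨hyu, hys⟩ := hy
    have h1 := hsq y hyu hys
    have h2 : (c : R) * ((p : R) ^ (r - k) * ((y + x0) * (y + -x0))) = 0 := by
      linear_combination h0 - h1
    rw [hcu.mul_right_eq_zero] at h2
    by_cases ha : IsUnit (y + x0)
    · right
      rw [← ha.mul_right_eq_zero]; linear_combination h2
    by_cases hb : IsUnit (y + -x0)
    · left
      rw [← hb.mul_right_eq_zero]; linear_combination h2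
    exfalso
    obtain ⟨a, ha⟩ := nonunit_eq p r hp hr _ ha
    obtain ⟨b, hb⟩ := nonunit_eq p r hp hr _ hb
    have : (2 : R) * x0 = p * (a - b) := by linear_combination ha - hb
    exact hpn (a - b) (this ▸ h2u.mul hu0)
  refine (card_le_card hsub).trans ((card_union_le _ _).trans ?_)
  rw [two_mul]
  refine Nat.add_le_add ?_ ?_
  · convert ker_count p r k hp hk x0
  · convert ker_count p r k hp hk (-x0)
noncomputable def sChi (p n : ℕ) [Fact p.Prime] (x : ZMod n) : ℂ :=
  ((quadraticChar (ZMod p) (x.cast : ZMod p) : ℤ) : ℂ)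

lemma sChi_norm_eq (p n : ℕ) [Fact p.Prime] (x : ZMod n) (hx : (x.cast : ZMod p) ≠ 0) :
    ‖sChi p n x‖ = 1 := by
  unfold sChi
  rcases quadraticChar_dichotomy hx with h | h <;> simp [h]

lemma sChi_norm_le (p n : ℕ) [Fact p.Prime] (x : ZMod n) : ‖sChi p n x‖ ≤ 1 := by
  by_cases hx : (x.cast : ZMod p) = 0
  · simp [sChi, hx]
  · exact (sChi_norm_eq p n x hx).le

lemma sChi_mul (p n : ℕ) [Fact p.Prime] (h : p ∣ n) (x y : ZMod n) :
    sChi p n (x * y) = sChi p n x * sChi p n y := by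
  unfold sChi
  rw [ZMod.cast_mul h, map_mul]
  push_cast
  rfl

lemma sChi_unit (p r : ℕ) [Fact p.Prime] (hr : 1 ≤ r) (x : ZMod (p ^ r))
    (hx : sChi p (p ^ r) x ≠ 0) : IsUnit x := by
  have hp : p.Prime := Fact.out
  have : NeZero (p ^ r) := ⟨(pow_pos hp.pos r).ne'⟩
  rw [← ZMod.natCast_zmod_val x, ZMod.isUnit_natCast_iff_not_dvd_pow hp hr]
  intro h
  apply hx
  have : (x.cast : ZMod p) = 0 := by
    rw [ZMod.cast_eq_val, ZMod.natCast_eq_zero_iff]; exact h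
  simp [sChi, this]

lemma sChi_per (p r : ℕ) [Fact p.Prime] (hr : 1 ≤ r) (x y : ZMod (p ^ r)) :
    sChi p (p ^ r) (x * (1 + p * y)) = sChi p (p ^ r) x := by
  have hd : p ∣ p ^ r := dvd_pow_self p (by omega)
  have : (((x * (1 + p * y) : ZMod (p ^ r))).cast : ZMod p) = x.cast := by
    rw [ZMod.cast_mul hd, ZMod.cast_add hd, ZMod.cast_mul hd, ZMod.cast_natCast hd,
      ZMod.cast_one hd]
    simp
  unfold sChi
  rw [this]

lemma sum_cast (n n' m : ℕ) [NeZero n] [NeZero n'] (hn : n = m * n') (G : ZMod n' → ℂ) :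
    ∑ x : ZMod n, G (x.cast) = m * ∑ y : ZMod n', G y := by
  classical
  have hd : n' ∣ n := ⟨m, by rw [hn, mul_comm]⟩
  let φ : ZMod n →+* ZMod n' := ZMod.castHom hd (ZMod n')
  have hsurj : Function.Surjective φ := ZMod.castHom_surjective hd
  have hcard : ∀ y : ZMod n', ((univ : Finset (ZMod n)).filter (fun x => φ x = y)).card =
      ((univ : Finset (ZMod n)).filter (fun x => φ x = 0)).card := fun y =>
    AddMonoidHom.card_fiber_eq_of_mem_range φ.toAddMonoidHom (hsurj y) (hsurj 0)
  set K := ((univ : Finset (ZMod n)).filter (fun x => φ x = 0)).card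
  have hK : K = m := by
    have h1 : (univ : Finset (ZMod n)).card = ∑ y : ZMod n', 
        ((univ : Finset (ZMod n)).filter (fun x => φ x = y)).card :=
      Finset.card_eq_sum_card_fiberwise (fun _ _ => by simp)
    simp only [hcard] at h1
    rw [sum_const, card_univ, card_univ, ZMod.card, ZMod.card, smul_eq_mul, hn, mul_comm] at h1
    exact (Nat.eq_of_mul_eq_mul_left (Nat.pos_of_ne_zero (NeZero.ne n')) h1).symm
  rw [← Finset.sum_fiberwise (univ : Finset (ZMod n)) φ, Finset.mul_sum]
  refine Finset.sum_congr rfl fun y _ => ?_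
  have : ∀ x ∈ (univ : Finset (ZMod n)).filter (fun x => φ x = y), G x.cast = G y := by
    intro x hx
    rw [mem_filter] at hx
    rw [← hx.2]; rfl
  rw [Finset.sum_congr rfl this, sum_const, hcard, hK, nsmul_eq_mul]

noncomputable def sT (p n : ℕ) [Fact p.Prime] [NeZero n] (c d : ℤ) : ℂ :=
  ∑ x : ZMod n, sChi p n x * (ZMod.stdAddChar ((c : ZMod n) * x + (d : ZMod n) * x⁻¹) : ℂ)

lemma std_scale (n n' m : ℕ) [NeZero n] [NeZero n'] (hm : m ≠ 0) (hn : n = m * n') (y : ZMod n) :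
    (ZMod.stdAddChar ((m : ZMod n) * y) : ℂ) = ZMod.stdAddChar (y.cast : ZMod n') := by
  have e1 : (m : ZMod n) * y = ((m * y.val : ℤ) : ZMod n) := by
    push_cast; rw [ZMod.natCast_zmod_val]
  have e2 : (y.cast : ZMod n') = ((y.val : ℤ) : ZMod n') := by
    push_cast; rw [ZMod.cast_eq_val]
  rw [e1, e2, ZMod.stdAddChar_coe, ZMod.stdAddChar_coe]
  congr 1
  have h1 : (m : ℂ) ≠ 0 := by exact_mod_cast hm
  have h2 : (n' : ℂ) ≠ 0 := by exact_mod_cast NeZero.ne n'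
  have h3 : (n : ℂ) = m * n' := by rw [hn]; push_cast; rfl
  rw [h3]
  push_cast
  field_simp

lemma sT_descend (p m s : ℕ) [Fact p.Prime] [NeZero (p ^ (m + s))] [NeZero (p ^ s)] (hs : 1 ≤ s)
    (c d : ℤ) :
    sT p (p ^ (m + s)) ((p : ℤ) ^ m * c) ((p : ℤ) ^ m * d) = (p : ℂ) ^ m * sT p (p ^ s) c d := by
  have hp : p.Prime := Fact.out
  have hn : p ^ (m + s) = p ^ m * p ^ s := pow_add _ _ _
  have hd : p ^ s ∣ p ^ (m + s) := ⟨p ^ m, by rw [hn, mul_comm]⟩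
  have hps : p ∣ p ^ s := dvd_pow_self p (by omega)
  have h := sum_cast (p ^ (m + s)) (p ^ s) (p ^ m) hn (fun x => sChi p (p ^ s) x *
    (ZMod.stdAddChar ((c : ZMod (p ^ s)) * x + (d : ZMod (p ^ s)) * x⁻¹) : ℂ))
  push_cast at h
  unfold sT
  rw [← h]
  refine Finset.sum_congr rfl fun x _ => ?_
  have hchi : sChi p (p ^ s) (x.cast : ZMod (p ^ s)) = sChi p (p ^ (m + s)) x := by
    unfold sChi
    have : ((x.cast : ZMod (p ^ s)).cast : ZMod p) = x.cast := by
      rw [ZMod.cast_eq_val (a := x), ZMod.cast_natCast hps, ← ZMod.cast_eq_val]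
    rw [this]
  rw [hchi]
  by_cases hx : sChi p (p ^ (m + s)) x = 0
  · simp [hx]
  have hxu := sChi_unit p (m + s) (by omega) x hx
  congr 1
  have e1 : (((p : ℤ) ^ m * c : ℤ) : ZMod (p ^ (m + s))) * x +
      (((p : ℤ) ^ m * d : ℤ) : ZMod (p ^ (m + s))) * x⁻¹ =
      ((p ^ m : ℕ) : ZMod (p ^ (m + s))) * (c * x + d * x⁻¹) := by
    push_cast; ring
  rw [e1, std_scale _ (p ^ s) (p ^ m) (pow_pos hp.pos m).ne' hn]
  congr 1
  have e2 : ((x⁻¹ : ZMod (p ^ (m + s))).cast : ZMod (p ^ s)) = (x.cast : ZMod (p ^ s))⁻¹ := by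
    symm
    apply ZMod.inv_eq_of_mul_eq_one
    rw [← ZMod.cast_mul hd, ZMod.mul_inv_of_unit x hxu, ZMod.cast_one hd]
  rw [ZMod.cast_add hd, ZMod.cast_mul hd, ZMod.cast_mul hd, ZMod.cast_intCast hd,
    ZMod.cast_intCast hd, e2]

lemma sum_eq_sT (p : ℕ) [Fact p.Prime] (r : ℕ) [NeZero (p ^ r)] (hr : 1 ≤ r)
    (c d : ℤ) :
    (∑ b ∈ (Finset.Icc 1 (p ^ r)).filter (fun b => Nat.gcd b p = 1),
        (legendreSym p (b : ℤ) : ℂ) *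
          eChar (p ^ r) (c * b + d * (((b : ZMod (p ^ r))⁻¹).val : ℤ))) = sT p (p ^ r) c d := by
  have hp : p.Prime := Fact.out
  have hpr : p ∣ p ^ r := dvd_pow_self p (by omega)
  set q := p ^ r with hq
  have hterm : ∀ b : ℕ, (legendreSym p (b : ℤ) : ℂ) *
      eChar q (c * b + d * (((b : ZMod q)⁻¹).val : ℤ)) =
      sChi p q (b : ZMod q) * (ZMod.stdAddChar ((c : ZMod q) * (b : ZMod q) +
        (d : ZMod q) * (b : ZMod q)⁻¹) : ℂ) := by
    intro b
    unfold sChi legendreSym eChar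
    rw [ZMod.cast_natCast hpr, ← ZMod.stdAddChar_coe]
    push_cast
    rw [ZMod.natCast_zmod_val]
  rw [Finset.sum_congr rfl (fun b _ => hterm b)]
  unfold sT
  have hzero : ∀ b : ℕ, ¬ Nat.gcd b p = 1 → sChi p q (b : ZMod q) = 0 := by
    intro b hb
    have h : p ∣ b := by
      by_contra h
      exact hb (Nat.Coprime.symm ((Nat.Prime.coprime_iff_not_dvd hp).2 h))
    unfold sChi
    rw [ZMod.cast_natCast hpr, (ZMod.natCast_eq_zero_iff b p).2 h]
    simp
  rw [Finset.sum_filter_of_ne]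
  · have hqpos : 0 < q := Nat.pos_of_ne_zero (NeZero.ne q)
    refine Finset.sum_bij (fun b _ => (b : ZMod q)) (fun _ _ => mem_univ _) ?_ ?_ (fun _ _ => rfl)
    · intro a ha b hb hab
      rw [mem_Icc] at ha hb
      rw [ZMod.natCast_eq_natCast_iff'] at hab
      rcases ha.2.lt_or_eq with h1 | h1 <;> rcases hb.2.lt_or_eq with h2 | h2
      · rwa [Nat.mod_eq_of_lt h1, Nat.mod_eq_of_lt h2] at hab
      · rw [Nat.mod_eq_of_lt h1, h2, Nat.mod_self] at hab; omega
      · rw [Nat.mod_eq_of_lt h2, h1, Nat.mod_self] at hab; omega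
      · omega
    · intro x _
      by_cases hx : x = 0
      · exact ⟨q, by simp; omega, by simp [hx]⟩
      · refine ⟨x.val, ?_, ZMod.natCast_zmod_val x⟩
        rw [mem_Icc]
        have := (ZMod.val_ne_zero x).2 hx
        have := ZMod.val_lt x
        omega
  · intro b _ hb
    by_contra h
    exact hb (by rw [hzero b h, zero_mul])

lemma sT_prime (p n : ℕ) [Fact p.Prime] [NeZero n] (hn : n = p) (c d : ℤ)
    (hcd : ¬ ((p : ℤ) ∣ c ∧ (p : ℤ) ∣ d)) : ‖sT p n c d‖ ^ 4 ≤ 16 * (p : ℝ) ^ 3 := by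
  subst hn
  refine prime_bound n (sChi n n) ?_ ?_ (sChi_mul n n dvd_rfl) c d ?_
  · simp [sChi]
  · intro x hx
    exact sChi_norm_eq n n x (by simpa using hx)
  · rw [ne_eq, ne_eq, ZMod.intCast_zmod_eq_zero_iff_dvd, ZMod.intCast_zmod_eq_zero_iff_dvd]
    tauto

lemma sT_coprime (p s : ℕ) [Fact p.Prime] [NeZero (p ^ s)] (hodd : Odd p) (hs : 1 ≤ s) (c d : ℤ)
    (hcd : ¬ ((p : ℤ) ∣ c ∧ (p : ℤ) ∣ d)) :
    ‖sT p (p ^ s) c d‖ ≤ 2 * (p : ℝ) ^ ((3 : ℝ) / 4 * s) := by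
  have hp : p.Prime := Fact.out
  have hp1 : (1 : ℝ) ≤ p := by exact_mod_cast hp.one_le
  have hp0 : (0 : ℝ) ≤ p := by linarith
  rcases hs.eq_or_lt with h | h
  · subst h
    have h4 := sT_prime p (p ^ 1) (pow_one p) c d hcd
    refine le_of_pow_le_pow_left₀ (n := 4) (by norm_num) (by positivity) (h4.trans (le_of_eq ?_))
    rw [mul_pow, ← Real.rpow_natCast ((p : ℝ) ^ _) 4, ← Real.rpow_mul hp0,
      ← Real.rpow_natCast (p : ℝ) 3]
    norm_num
  · set k := s / 2 with hk
    have hk1 : 1 ≤ k := by omega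
    have hks : k ≤ s := by omega
    have hpr : (p : ZMod (p ^ s)) ^ s = 0 := by
      have := ZMod.natCast_self (p ^ s); push_cast at this; exact this
    have h1 := stat_phase (p ^ s) (sChi p (p ^ s)) ((p : ZMod (p ^ s)) ^ (s - k)) c d
      (by
        rw [← pow_add, show s - k + (s - k) = s + (s - 2 * k) by omega, pow_add, hpr, zero_mul])
      (sChi_norm_le p _) (sChi_unit p s hs)
      (by
        intro x t
        have : (p : ZMod (p ^ s)) ^ (s - k) * t = p * ((p : ZMod (p ^ s)) ^ (s - k - 1) * t) := by
          rw [← mul_assoc, ← pow_succ', show s - k - 1 + 1 = s - k by omega]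
        rw [this, sChi_per p s hs])
    have h2 := sol_count p s k hp hodd hk1 hks c d hcd
    have h3 : ‖sT p (p ^ s) c d‖ ≤ 2 * (p : ℝ) ^ (s - k) := by
      refine h1.trans ?_
      exact_mod_cast h2
    refine h3.trans ?_
    rw [← Real.rpow_natCast (p : ℝ) (s - k)]
    gcongr
    rw [Nat.cast_sub hks]
    have : (s : ℝ) ≤ 4 * k := by exact_mod_cast (by omega : s ≤ 4 * k)
    linarith

/-- Elementary Salié sum bound: for `q = p^r` with `p` an odd prime,
`|∑_{(b,p)=1} (b/p) e_q(cb + d b̄)| ≤ 2 q^{3/4} gcd(q,c,d)^{1/4}`. -/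
theorem salie_sum_bound (p : ℕ) [Fact p.Prime] (hodd : Odd p) (r : ℕ) (hr : 1 ≤ r)
    (c d : ℤ) :
    norm (∑ b ∈ (Finset.Icc 1 (p ^ r)).filter (fun b => Nat.gcd b p = 1),
        (legendreSym p (b : ℤ) : ℂ) *
          eChar (p ^ r) (c * b + d * (((b : ZMod (p ^ r))⁻¹).val : ℤ)))
      ≤ 2 * ((p : ℝ) ^ r) ^ ((3 : ℝ) / 4) *
          ((Nat.gcd (p ^ r) (Int.gcd c d) : ℝ)) ^ ((1 : ℝ) / 4) := by
  have hp : p.Prime := Fact.out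
  have hp1 : (1 : ℝ) ≤ p := by exact_mod_cast hp.one_le
  have hp0 : (0 : ℝ) < p := by linarith
  have hNZ : ∀ k, NeZero (p ^ k) := fun k => ⟨(pow_pos hp.pos k).ne'⟩
  have := hNZ r
  rw [sum_eq_sT p r hr]
  obtain ⟨m, hmr, hm⟩ := (Nat.dvd_prime_pow hp).1 (Nat.gcd_dvd_left (p ^ r) (Int.gcd c d))
  rw [hm]
  obtain ⟨s, rfl⟩ : ∃ s, r = m + s := ⟨r - m, by omega⟩
  have hrhs : 2 * ((p : ℝ) ^ (m + s)) ^ ((3 : ℝ) / 4) * (((p ^ m : ℕ) : ℝ)) ^ ((1 : ℝ) / 4) =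
      (p : ℝ) ^ m * (2 * (p : ℝ) ^ ((3 : ℝ) / 4 * s)) := by
    push_cast
    rw [← Real.rpow_natCast, ← Real.rpow_natCast, ← Real.rpow_mul hp0.le, ← Real.rpow_mul hp0.le,
      mul_assoc, ← Real.rpow_add hp0, mul_left_comm, ← Real.rpow_add hp0]
    congr 2
    push_cast
    ring
  rw [hrhs]
  rcases Nat.eq_zero_or_pos s with h0 | hs
  · subst h0
    simp only [Nat.cast_zero, mul_zero, Real.rpow_zero, mul_one]
    unfold sT
    refine (norm_sum_le _ _).trans ?_
    have : ∀ x ∈ (univ : Finset (ZMod (p ^ (m + 0)))), ‖sChi p (p ^ (m + 0)) x *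
        (ZMod.stdAddChar ((c : ZMod (p ^ (m + 0))) * x + (d : ZMod (p ^ (m + 0))) * x⁻¹) : ℂ)‖
        ≤ 1 := by
      intro x _
      rw [norm_mul, AddChar.norm_apply, mul_one]
      exact sChi_norm_le _ _ _
    refine (Finset.sum_le_card_nsmul _ _ _ this).trans ?_
    rw [card_univ, ZMod.card]
    simp only [Nat.add_zero, nsmul_eq_mul, mul_one]
    push_cast
    nlinarith [pow_pos hp0 m]
  · have hg : p ^ m ∣ Int.gcd c d := hm ▸ Nat.gcd_dvd_right _ _
    have hc : (p : ℤ) ^ m ∣ c := by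
      have := (Int.natCast_dvd_natCast.2 hg).trans (Int.gcd_dvd_left c d)
      exact_mod_cast this
    have hd : (p : ℤ) ^ m ∣ d := by
      have := (Int.natCast_dvd_natCast.2 hg).trans (Int.gcd_dvd_right c d)
      exact_mod_cast this
    obtain ⟨c', rfl⟩ := hc
    obtain ⟨d', rfl⟩ := hd
    have := hNZ s
    have hcd : ¬ ((p : ℤ) ∣ c' ∧ (p : ℤ) ∣ d') := by
      rintro ⟨⟨a, rfl⟩, ⟨b, rfl⟩⟩
      have h1 : p ^ (m + 1) ∣ Int.gcd ((p : ℤ) ^ m * (p * a)) ((p : ℤ) ^ m * (p * b)) := by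
        rw [Int.dvd_gcd_iff]
        push_cast
        exact ⟨⟨a, by ring⟩, ⟨b, by ring⟩⟩
      have h2 : p ^ (m + 1) ∣ p ^ (m + s) := pow_dvd_pow p (by omega)
      have h3 := Nat.dvd_gcd h2 h1
      rw [hm, Nat.pow_dvd_pow_iff_le_right hp.one_lt] at h3
      omega
    rw [sT_descend p m s hs, norm_mul, norm_pow, Complex.norm_natCast]
    gcongr
    exact sT_coprime p s hodd hs c' d' hcd
end

section
/- Let γ: ℝ → ℝ be a smooth function supported in [0,1] with 0 ≤ γ ≤ 1. There is a constant C_γ (depending only on γ) such that for every real binary quadratic form f(y,z) = A y² + 2B y z + C z² with D = AC − B² ≠ 0, every real φ ≠ 0, every P > 0, and all reals α, β: |∫_ℝ ∫_ℝ γ(y/P) γ(z/P) e(φ·f(y,z) + α y + β z) dy dz| ≤ C_γ / (|φ| · |D|^{1/2}), where e(t) = exp(2πi t). -/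
open MeasureTheory Filter Topology

namespace OscQuad

/-- One-dimensional regularized oscillating Gaussian. -/
noncomputable def G (ε t s x : ℝ) : ℂ :=
  Complex.exp (Complex.I * ((2 * Real.pi * s : ℝ) : ℂ) * x) *
    Complex.exp (-((ε : ℂ) - ((2 * Real.pi * t : ℝ) : ℂ) * Complex.I) * (x : ℂ) ^ 2)

lemma G_eq (ε t s x : ℝ) : G ε t s x = Complex.exp (((-ε * x ^ 2 : ℝ) : ℂ) +
    ((2 * Real.pi * (t * x ^ 2 + s * x) : ℝ) : ℂ) * Complex.I) := by
  rw [G, ← Complex.exp_add]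
  congr 1
  push_cast
  ring

lemma norm_G (ε t s x : ℝ) : ‖G ε t s x‖ = Real.exp (-ε * x ^ 2) := by
  rw [G_eq, Complex.norm_exp]
  congr 1
  rw [Complex.add_re, Complex.ofReal_re, Complex.re_ofReal_mul]
  simp

lemma G_cont (ε t s : ℝ) : Continuous (G ε t s) := by
  unfold G
  fun_prop

lemma G_integrable {ε : ℝ} (hε : 0 < ε) (t s : ℝ) : Integrable (G ε t s) := by
  have hb : 0 < ((ε : ℂ) - ((2 * Real.pi * t : ℝ) : ℂ) * Complex.I).re := by
    rw [Complex.sub_re, Complex.re_ofReal_mul]; simpa using hε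
  have := integrable_cexp_quadratic hb (Complex.I * ((2 * Real.pi * s : ℝ) : ℂ)) 0
  refine this.congr (ae_of_all _ fun x => ?_)
  simp only [G]
  rw [← Complex.exp_add]
  congr 1
  ring

lemma G_integral {ε : ℝ} (hε : 0 < ε) {t : ℝ} (ht : t ≠ 0) (s : ℝ) :
    ‖∫ x, G ε t s x‖ ≤ 1 / Real.sqrt (2 * |t|) := by
  set b : ℂ := (ε : ℂ) - ((2 * Real.pi * t : ℝ) : ℂ) * Complex.I with hbdef
  have hbre : b.re = ε := by
    rw [hbdef, Complex.sub_re, Complex.re_ofReal_mul]; simp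
  have hbim : b.im = -(2 * Real.pi * t) := by
    rw [hbdef, Complex.sub_im, Complex.im_ofReal_mul]; simp
  have hb : 0 < b.re := by rw [hbre]; exact hε
  have h := fourierIntegral_gaussian hb ((2 * Real.pi * s : ℝ) : ℂ)
  have : ∫ x, G ε t s x = _ := h
  rw [this, norm_mul]
  have hbn : 2 * Real.pi * |t| ≤ ‖b‖ := by
    have := Complex.abs_im_le_norm b
    rw [hbim, abs_neg, abs_mul, abs_of_pos (by positivity : 0 < 2 * Real.pi)] at this
    exact this
  have htp : 0 < |t| := abs_pos.mpr ht
  have h1 : ‖((Real.pi : ℂ) / b) ^ (1 / 2 : ℂ)‖ ≤ 1 / Real.sqrt (2 * |t|) := by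
    have : (1 / 2 : ℂ) = ((1 / 2 : ℝ) : ℂ) := by push_cast; rfl
    rw [this, Complex.norm_cpow_real, ← Real.sqrt_eq_rpow, ← Real.sqrt_one,
      ← Real.sqrt_div zero_le_one, norm_div, Complex.norm_real, Real.norm_eq_abs,
      abs_of_pos Real.pi_pos]
    apply Real.sqrt_le_sqrt
    rw [div_le_div_iff₀ (lt_of_lt_of_le (by positivity) hbn) (by positivity)]
    simpa using (by linarith : Real.pi * (2 * |t|) ≤ 1 * ‖b‖)
  have h2 : ‖Complex.exp (-((2 * Real.pi * s : ℝ) : ℂ) ^ 2 / (4 * b))‖ ≤ 1 := by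
    rw [Complex.norm_exp, Real.exp_le_one_iff]
    have : -((2 * Real.pi * s : ℝ) : ℂ) ^ 2 / (4 * b) =
        ((-(2 * Real.pi * s) ^ 2 / 4 : ℝ) : ℂ) * b⁻¹ := by
      rw [div_eq_mul_inv, mul_inv]; push_cast; ring
    rw [this, Complex.re_ofReal_mul, Complex.inv_re]
    have : 0 ≤ b.re / Complex.normSq b := div_nonneg hb.le (Complex.normSq_nonneg _)
    nlinarith [sq_nonneg (2 * Real.pi * s)]
  calc _ ≤ 1 / Real.sqrt (2 * |t|) * 1 := by gcongr
    _ = _ := mul_one _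

lemma wiener {X : Type*} [MeasurableSpace X] {μ : Measure X} [SFinite μ]
    {g h : ℝ → ℂ} (hh : Integrable h)
    (hg : ∀ x, g x = ∫ u : ℝ, Complex.exp (2 * Real.pi * Complex.I * ((u * x : ℝ) : ℂ)) * h u)
    {w : X → ℝ} (hw : Measurable w) {K : X → ℂ} (hK : Integrable K μ) {M : ℝ}
    (hM : ∀ u : ℝ,
      ‖∫ p, Complex.exp (2 * Real.pi * Complex.I * ((u * w p : ℝ) : ℂ)) * K p ∂μ‖ ≤ M) :
    ‖∫ p, g (w p) * K p ∂μ‖ ≤ (∫ u, ‖h u‖) * M := by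
  have hint : Integrable (fun q : X × ℝ =>
      Complex.exp (2 * Real.pi * Complex.I * ((q.2 * w q.1 : ℝ) : ℂ)) * (K q.1 * h q.2))
      (μ.prod volume) := by
    refine (hK.mul_prod hh).bdd_mul (c := 1) ?_ (ae_of_all _ fun q => ?_)
    · apply Measurable.aestronglyMeasurable
      fun_prop
    · rw [Complex.norm_exp]
      simp
  have e1 : ∫ p, g (w p) * K p ∂μ = ∫ p, (∫ u : ℝ,
      Complex.exp (2 * Real.pi * Complex.I * ((u * w p : ℝ) : ℂ)) * (K p * h u)) ∂μ := by
    congr 1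
    ext p
    rw [hg, ← integral_mul_const]
    congr 1
    ext u
    ring
  rw [e1, integral_integral_swap hint]
  have e2 : ∀ u : ℝ, ∫ p, Complex.exp (2 * Real.pi * Complex.I * ((u * w p : ℝ) : ℂ)) *
      (K p * h u) ∂μ =
      (∫ p, Complex.exp (2 * Real.pi * Complex.I * ((u * w p : ℝ) : ℂ)) * K p ∂μ) * h u := by
    intro u
    rw [← integral_mul_const]
    congr 1
    ext p
    ring
  simp_rw [e2]
  rw [← integral_mul_const]
  refine norm_integral_le_of_norm_le (hh.norm.mul_const M) (ae_of_all _ fun u => ?_)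
  rw [norm_mul, mul_comm]
  exact mul_le_mul_of_nonneg_left (hM u) (norm_nonneg _)

/-- Two-dimensional kernel. -/
noncomputable def K (ε t₁ s₁ t₂ s₂ c : ℝ) (p : ℝ × ℝ) : ℂ :=
  G ε t₁ (s₁ - s₂ * c) p.1 * G ε t₂ s₂ (c * p.1 + p.2)

lemma shear (c : ℝ) :
    MeasurePreserving (fun p : ℝ × ℝ => (p.1, c * p.1 + p.2)) volume volume := by
  have := (MeasurePreserving.id (volume : Measure ℝ)).skew_product
    (μc := (volume : Measure ℝ)) (μd := (volume : Measure ℝ))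
    (g := fun a b => c * a + b) (by unfold Function.uncurry; fun_prop)
    (ae_of_all _ fun a => (measurePreserving_add_left volume (c * a)).map_eq)
  exact this

lemma K_integrable {ε : ℝ} (hε : 0 < ε) (t₁ s₁ t₂ s₂ c : ℝ) :
    Integrable (K ε t₁ s₁ t₂ s₂ c) := by
  have h := (G_integrable hε t₁ (s₁ - s₂ * c)).mul_prod (G_integrable hε t₂ s₂)
  exact (shear c).integrable_comp_of_integrable h

lemma K_integral {ε : ℝ} (hε : 0 < ε) {t₁ t₂ : ℝ} (h₁ : t₁ ≠ 0) (h₂ : t₂ ≠ 0) (s₁ s₂ c : ℝ) :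
    ‖∫ p, K ε t₁ s₁ t₂ s₂ c p‖ ≤ 1 / Real.sqrt (2 * |t₁|) * (1 / Real.sqrt (2 * |t₂|)) := by
  have h := (G_integrable hε t₁ (s₁ - s₂ * c)).mul_prod (G_integrable hε t₂ s₂)
  have e : ∫ p, K ε t₁ s₁ t₂ s₂ c p =
      ∫ p : ℝ × ℝ, G ε t₁ (s₁ - s₂ * c) p.1 * G ε t₂ s₂ p.2 := by
    have h3 := integral_map (μ := volume) (shear c).measurable.aemeasurable
      (f := fun p : ℝ × ℝ => G ε t₁ (s₁ - s₂ * c) p.1 * G ε t₂ s₂ p.2)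
      (by rw [(shear c).map_eq]; exact h.aestronglyMeasurable)
    rw [(shear c).map_eq] at h3
    exact h3.symm
  rw [e, Measure.volume_eq_prod, integral_prod_mul, norm_mul]
  exact mul_le_mul (G_integral hε h₁ _) (G_integral hε h₂ _) (norm_nonneg _) (by positivity)

lemma K_shift1 (ε t₁ s₁ t₂ s₂ c P u : ℝ) (p : ℝ × ℝ) :
    Complex.exp (2 * Real.pi * Complex.I * ((u * (p.1 / P) : ℝ) : ℂ)) * K ε t₁ s₁ t₂ s₂ c p =
      K ε t₁ (s₁ + u / P) t₂ s₂ c p := by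
  simp only [K, G_eq, ← Complex.exp_add]
  congr 1
  push_cast
  ring

lemma K_shift2 (ε t₁ s₁ t₂ s₂ c P u : ℝ) (p : ℝ × ℝ) :
    Complex.exp (2 * Real.pi * Complex.I * ((u * (p.2 / P) : ℝ) : ℂ)) * K ε t₁ s₁ t₂ s₂ c p =
      K ε t₁ s₁ t₂ (s₂ + u / P) c p := by
  simp only [K, G_eq, ← Complex.exp_add]
  congr 1
  push_cast
  ring

lemma norm_K_le {ε : ℝ} (hε : 0 ≤ ε) (t₁ s₁ t₂ s₂ c : ℝ) (p : ℝ × ℝ) :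
    ‖K ε t₁ s₁ t₂ s₂ c p‖ ≤ 1 := by
  rw [K, norm_mul, norm_G, norm_G]
  refine mul_le_one₀ ?_ (Real.exp_pos _).le ?_ <;>
  · rw [Real.exp_le_one_iff]
    nlinarith [sq_nonneg p.1, sq_nonneg (c * p.1 + p.2),
      mul_nonneg hε (sq_nonneg p.1), mul_nonneg hε (sq_nonneg (c * p.1 + p.2))]

lemma K_cont (t₁ s₁ t₂ s₂ c : ℝ) (p : ℝ × ℝ) : Continuous fun ε => K ε t₁ s₁ t₂ s₂ c p := by
  unfold K G
  fun_prop

lemma K_cont' (ε t₁ s₁ t₂ s₂ c : ℝ) : Continuous (K ε t₁ s₁ t₂ s₂ c) := by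
  unfold K G
  fun_prop

lemma bound_eps {g h : ℝ → ℂ} (hh : Integrable h) (hgc : Continuous g) (hgb : ∀ x, ‖g x‖ ≤ 1)
    (hg : ∀ x, g x = ∫ u : ℝ, Complex.exp (2 * Real.pi * Complex.I * ((u * x : ℝ) : ℂ)) * h u)
    {ε : ℝ} (hε : 0 < ε) {t₁ t₂ : ℝ} (h₁ : t₁ ≠ 0) (h₂ : t₂ ≠ 0) (s₁ s₂ c P : ℝ) :
    ‖∫ p : ℝ × ℝ, g (p.1 / P) * (g (p.2 / P) * K ε t₁ s₁ t₂ s₂ c p)‖ ≤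
      (∫ u, ‖h u‖) * ((∫ u, ‖h u‖) *
        (1 / Real.sqrt (2 * |t₁|) * (1 / Real.sqrt (2 * |t₂|)))) := by
  refine wiener hh hg (w := fun p : ℝ × ℝ => p.1 / P) (by fun_prop) ?_ fun u => ?_
  · refine (K_integrable hε t₁ s₁ t₂ s₂ c).bdd_mul (c := 1) ?_ (ae_of_all _ fun q => hgb _)
    exact (by fun_prop : Continuous fun p : ℝ × ℝ => g (p.2 / P)).aestronglyMeasurable
  · have e : ∀ p : ℝ × ℝ, Complex.exp (2 * Real.pi * Complex.I * ((u * (p.1 / P) : ℝ) : ℂ)) *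
        (g (p.2 / P) * K ε t₁ s₁ t₂ s₂ c p) = g (p.2 / P) * K ε t₁ (s₁ + u / P) t₂ s₂ c p := by
      intro p
      rw [← K_shift1]
      ring
    simp_rw [e]
    refine wiener hh hg (w := fun p : ℝ × ℝ => p.2 / P) (by fun_prop)
      (K_integrable hε _ _ _ _ _) fun v => ?_
    simp_rw [K_shift2]
    exact K_integral hε h₁ h₂ _ _ _

lemma bound_zero {g h : ℝ → ℂ} (hh : Integrable h) (hgc : Continuous g) (hgi : Integrable g)
    (hgb : ∀ x, ‖g x‖ ≤ 1)
    (hg : ∀ x, g x = ∫ u : ℝ, Complex.exp (2 * Real.pi * Complex.I * ((u * x : ℝ) : ℂ)) * h u)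
    {t₁ t₂ : ℝ} (h₁ : t₁ ≠ 0) (h₂ : t₂ ≠ 0) (s₁ s₂ c : ℝ) {P : ℝ} (hP : 0 < P) :
    ‖∫ p : ℝ × ℝ, g (p.1 / P) * (g (p.2 / P) * K 0 t₁ s₁ t₂ s₂ c p)‖ ≤
      (∫ u, ‖h u‖) * ((∫ u, ‖h u‖) *
        (1 / Real.sqrt (2 * |t₁|) * (1 / Real.sqrt (2 * |t₂|)))) := by
  have hi : Integrable (fun p : ℝ × ℝ => ‖g (p.1 / P) * g (p.2 / P)‖) :=
    ((hgi.comp_div hP.ne').mul_prod (hgi.comp_div hP.ne')).norm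
  have lim : Tendsto (fun ε => ∫ p : ℝ × ℝ, g (p.1 / P) * (g (p.2 / P) * K ε t₁ s₁ t₂ s₂ c p))
      (𝓝[>] 0) (𝓝 (∫ p : ℝ × ℝ, g (p.1 / P) * (g (p.2 / P) * K 0 t₁ s₁ t₂ s₂ c p))) := by
    refine tendsto_integral_filter_of_dominated_convergence _ ?_ ?_ hi ?_
    · refine Eventually.of_forall fun ε => ?_
      have := K_cont' ε t₁ s₁ t₂ s₂ c
      exact Continuous.aestronglyMeasurable (by fun_prop)
    · filter_upwards [self_mem_nhdsWithin] with ε hε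
      refine ae_of_all _ fun p => ?_
      rw [← mul_assoc, norm_mul]
      exact mul_le_of_le_one_right (norm_nonneg _) (norm_K_le (le_of_lt hε) _ _ _ _ _ _)
    · refine ae_of_all _ fun p => ?_
      have := K_cont t₁ s₁ t₂ s₂ c p
      exact ((by fun_prop : Continuous fun ε => g (p.1 / P) * (g (p.2 / P) *
        K ε t₁ s₁ t₂ s₂ c p)).tendsto 0).mono_left nhdsWithin_le_nhds
  refine le_of_tendsto lim.norm ?_
  filter_upwards [self_mem_nhdsWithin] with ε hε
  exact bound_eps hh hgc hgb hg hε h₁ h₂ s₁ s₂ c P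

/-- The phase factor. -/
noncomputable def S (A B C φ α β : ℝ) (p : ℝ × ℝ) : ℂ :=
  Complex.exp (2 * Real.pi * Complex.I *
    ((φ * (A * p.1 ^ 2 + 2 * B * p.1 * p.2 + C * p.2 ^ 2) + α * p.1 + β * p.2 : ℝ) : ℂ))

lemma S_eq (A B : ℝ) {C : ℝ} (hC : C ≠ 0) (φ α β : ℝ) (p : ℝ × ℝ) :
    S A B C φ α β p = K 0 (φ * (A * C - B ^ 2) / C) α (φ * C) β (B / C) p := by
  simp only [S, K, G_eq, ← Complex.exp_add]
  have hC' : (C : ℂ) ≠ 0 := by exact_mod_cast hC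
  congr 1
  push_cast
  field_simp
  ring

lemma norm_S (A B C φ α β : ℝ) (p : ℝ × ℝ) : ‖S A B C φ α β p‖ = 1 := by
  rw [S, Complex.norm_exp, mul_comm, Complex.re_ofReal_mul]
  simp

lemma S_cont (A B φ α β : ℝ) (p : ℝ × ℝ) : Continuous fun C => S A B C φ α β p := by
  unfold S
  fun_prop

lemma S_cont' (A B C φ α β : ℝ) : Continuous (S A B C φ α β) := by
  unfold S
  fun_prop

lemma bound_C {g h : ℝ → ℂ} (hh : Integrable h) (hgc : Continuous g) (hgi : Integrable g)
    (hgb : ∀ x, ‖g x‖ ≤ 1)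
    (hg : ∀ x, g x = ∫ u : ℝ, Complex.exp (2 * Real.pi * Complex.I * ((u * x : ℝ) : ℂ)) * h u)
    {A B C φ : ℝ} (α β : ℝ) {P : ℝ} (hD : A * C - B ^ 2 ≠ 0) (hC : C ≠ 0) (hφ : φ ≠ 0)
    (hP : 0 < P) :
    ‖∫ p : ℝ × ℝ, g (p.1 / P) * (g (p.2 / P) * S A B C φ α β p)‖ ≤
      ((∫ u, ‖h u‖) ^ 2 / 2) / (|φ| * Real.sqrt |A * C - B ^ 2|) := by
  simp_rw [S_eq A B hC]
  refine (bound_zero hh hgc hgi hgb hg (by positivity) (by positivity) _ _ _ hP).trans_eq ?_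
  have : Real.sqrt (2 * |φ * (A * C - B ^ 2) / C|) * Real.sqrt (2 * |φ * C|) =
      2 * (|φ| * Real.sqrt |A * C - B ^ 2|) := by
    rw [← Real.sqrt_mul (by positivity), abs_div, abs_mul, abs_mul]
    have hc : |C| ≠ 0 := abs_ne_zero.mpr hC
    have : 2 * (|φ| * |A * C - B ^ 2| / |C|) * (2 * (|φ| * |C|)) =
        (2 * |φ|) ^ 2 * |A * C - B ^ 2| := by
      field_simp
    rw [this, Real.sqrt_mul (by positivity), Real.sqrt_sq (by positivity)]
    ring
  rw [div_mul_div_comm, this]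
  have h1 : |φ| ≠ 0 := abs_ne_zero.mpr hφ
  have h2 : Real.sqrt |A * C - B ^ 2| ≠ 0 := by positivity
  field_simp

lemma bound_all {g h : ℝ → ℂ} (hh : Integrable h) (hgc : Continuous g) (hgi : Integrable g)
    (hgb : ∀ x, ‖g x‖ ≤ 1)
    (hg : ∀ x, g x = ∫ u : ℝ, Complex.exp (2 * Real.pi * Complex.I * ((u * x : ℝ) : ℂ)) * h u)
    {A B C φ : ℝ} (α β : ℝ) {P : ℝ} (hD : A * C - B ^ 2 ≠ 0) (hφ : φ ≠ 0)
    (hP : 0 < P) :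
    ‖∫ p : ℝ × ℝ, g (p.1 / P) * (g (p.2 / P) * S A B C φ α β p)‖ ≤
      ((∫ u, ‖h u‖) ^ 2 / 2) / (|φ| * Real.sqrt |A * C - B ^ 2|) := by
  by_cases hC : C = 0
  swap
  · exact bound_C hh hgc hgi hgb hg α β hD hC hφ hP
  have hi : Integrable (fun p : ℝ × ℝ => ‖g (p.1 / P) * g (p.2 / P)‖) :=
    ((hgi.comp_div hP.ne').mul_prod (hgi.comp_div hP.ne')).norm
  have lim : Tendsto (fun c => ∫ p : ℝ × ℝ, g (p.1 / P) * (g (p.2 / P) * S A B c φ α β p))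
      (𝓝[≠] C) (𝓝 (∫ p : ℝ × ℝ, g (p.1 / P) * (g (p.2 / P) * S A B C φ α β p))) := by
    refine tendsto_integral_filter_of_dominated_convergence _ ?_ ?_ hi ?_
    · refine Eventually.of_forall fun c => ?_
      have := S_cont' A B c φ α β
      exact Continuous.aestronglyMeasurable (by fun_prop)
    · refine Eventually.of_forall fun c => ae_of_all _ fun p => ?_
      rw [← mul_assoc, norm_mul, norm_S, mul_one]
    · refine ae_of_all _ fun p => ?_
      have := S_cont A B φ α β p
      exact ((by fun_prop : Continuous fun c => g (p.1 / P) * (g (p.2 / P) *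
        S A B c φ α β p)).tendsto C).mono_left nhdsWithin_le_nhds
  have hDc : Continuous fun c => A * c - B ^ 2 := by fun_prop
  have lim2 : Tendsto (fun c => ((∫ u, ‖h u‖) ^ 2 / 2) / (|φ| * Real.sqrt |A * c - B ^ 2|))
      (𝓝[≠] C) (𝓝 (((∫ u, ‖h u‖) ^ 2 / 2) / (|φ| * Real.sqrt |A * C - B ^ 2|))) := by
    refine Tendsto.mono_left ?_ nhdsWithin_le_nhds
    refine Tendsto.div tendsto_const_nhds ?_ (by positivity)
    exact (by fun_prop : Continuous fun c => |φ| * Real.sqrt |A * c - B ^ 2|).tendsto C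
  refine le_of_tendsto_of_tendsto lim.norm lim2 ?_
  have hne : ∀ᶠ c in 𝓝[≠] C, A * c - B ^ 2 ≠ 0 :=
    nhdsWithin_le_nhds (hDc.continuousAt.eventually_ne hD)
  filter_upwards [self_mem_nhdsWithin, hne] with c hc hd
  exact bound_C hh hgc hgi hgb hg α β hd (by rw [hC] at hc; exact hc) hφ hP

open FourierTransform in
lemma exists_repr (γ : ℝ → ℝ) (hsmooth : ContDiff ℝ (⊤ : ℕ∞) γ)
    (hsupp : Function.support γ ⊆ Set.Icc 0 1) :
    Integrable (fun x => (γ x : ℂ)) ∧ ∃ h : ℝ → ℂ, Integrable h ∧ ∀ x, (γ x : ℂ) =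
      ∫ u : ℝ, Complex.exp (2 * Real.pi * Complex.I * ((u * x : ℝ) : ℂ)) * h u := by
  have hc : HasCompactSupport γ := HasCompactSupport.of_support_subset_isCompact isCompact_Icc hsupp
  have hc' : HasCompactSupport (fun x => (γ x : ℂ)) := hc.comp_left (g := Complex.ofReal) rfl
  have hs : ContDiff ℝ (⊤ : ℕ∞) (fun x => (γ x : ℂ)) := Complex.ofRealCLM.contDiff.comp hsmooth
  let F : SchwartzMap ℝ ℂ := hc'.toSchwartzMap hs
  have hF : (F : ℝ → ℂ) = fun x => (γ x : ℂ) := rfl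
  have hFi : Integrable (F : ℝ → ℂ) := F.integrable
  have hFFi : Integrable (𝓕 (F : ℝ → ℂ)) := by
    rw [← SchwartzMap.fourier_coe]; exact (𝓕 F).integrable
  refine ⟨hFi, 𝓕 (F : ℝ → ℂ), hFFi, fun x => ?_⟩
  have := congrFun (F.continuous.fourierInv_fourier_eq hFi hFFi) x
  rw [Real.fourierInv_eq'] at this
  change _ = (γ x : ℂ) at this
  rw [← this]
  congr 1
  ext u
  rw [smul_eq_mul]
  congr 2
  simp
  ring

end OscQuad

open OscQuad MeasureTheory in

/-- Stationary phase bound for the oscillatory integral with a nondegenerate quadratic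
phase: `|∬ γ(y/P)γ(z/P) e(φ f(y,z) + αy + βz) dy dz| ≤ C_γ / (|φ| |D|^{1/2})` where
`D = AC − B²` is the determinant of `f`. -/
theorem oscillatory_integral_quadratic_phase
    (γ : ℝ → ℝ) (hsmooth : ContDiff ℝ (⊤ : ℕ∞) γ)
    (hsupp : Function.support γ ⊆ Set.Icc 0 1)
    (hpos : ∀ t, 0 ≤ γ t) (hle : ∀ t, γ t ≤ 1) :
    ∃ Cγ : ℝ, ∀ A B C φ P α β : ℝ, A * C - B ^ 2 ≠ 0 → φ ≠ 0 → 0 < P →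
      norm (∫ y : ℝ, ∫ z : ℝ,
          ((γ (y / P) * γ (z / P) : ℝ) : ℂ) *
            Complex.exp (2 * Real.pi * Complex.I *
              ((φ * (A * y ^ 2 + 2 * B * y * z + C * z ^ 2) + α * y + β * z : ℝ) : ℂ)))
        ≤ Cγ / (|φ| * Real.sqrt |A * C - B ^ 2|) := by
  obtain ⟨hgi, h, hh, hg⟩ := exists_repr γ hsmooth hsupp
  refine ⟨(∫ u, ‖h u‖) ^ 2 / 2, fun A B C φ P α β hD hφ hP => ?_⟩
  have hgc : Continuous (fun x => (γ x : ℂ)) := Complex.continuous_ofReal.comp hsmooth.continuous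
  have hgb : ∀ x, ‖(γ x : ℂ)‖ ≤ 1 := fun x => by
    rw [Complex.norm_real, Real.norm_eq_abs, abs_of_nonneg (hpos x)]; exact hle x
  have main := bound_all hh hgc hgi hgb hg (A := A) (B := B) (C := C) α β hD hφ hP
  have hi : Integrable (fun p : ℝ × ℝ => (γ (p.1 / P) : ℂ) * ((γ (p.2 / P) : ℂ) *
      S A B C φ α β p)) (volume.prod volume) := by
    have h0 := (hgi.comp_div hP.ne').mul_prod (hgi.comp_div hP.ne')
    refine (h0.mul_bdd (c := 1) (S_cont' A B C φ α β).aestronglyMeasurable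
      (ae_of_all _ fun p => (norm_S A B C φ α β p).le)).congr (ae_of_all _ fun p => ?_)
    simp only [mul_assoc]
  rw [Measure.volume_eq_prod, integral_prod _ hi] at main
  refine le_of_eq_of_le ?_ main
  congr 1
  refine integral_congr_ae (ae_of_all _ fun y => integral_congr_ae (ae_of_all _ fun z => ?_))
  simp only [S]
  push_cast
  ring
end
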